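/- arXiv:1511.00639 — 9 statements merged into one kernel-verified Lean document; each statement's English description precedes it below -/
import Mathlib

section
/- For every positive integer n, 1/ζ'(-2n) = (-1)^n · π^{2n} · 2^{2n+1} / (ζ(2n+1) · (2n)!), where ζ is the Riemann zeta function and ζ' its derivative. -/
open scoped Real

/-!
The functional equation `ζ(1 - s) = 2 (2π)^(-s) Γ(s) cos(πs/2) ζ(s)` holds on `1 < re s`, hence
near `s = 2n + 1`. There the cosine vanishes, so only the term differentiating the cosine survives
in the derivative of the right-hand side; comparing with `-ζ'(-2n)` on the left evaluates `ζ'(-2n)`.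
-/

lemma cos_pi_mul_odd_div_two (n : ℕ) :
    Complex.cos (π * (2 * (n : ℂ) + 1) / 2) = 0 := by
  rw [Complex.cos_eq_zero_iff]
  exact ⟨n, by push_cast; ring⟩

lemma sin_pi_mul_odd_div_two (n : ℕ) :
    Complex.sin (π * (2 * (n : ℂ) + 1) / 2) = (-1) ^ n := by
  rw [show (π : ℂ) * (2 * (n : ℂ) + 1) / 2 = π / 2 + n * π by ring,
    Complex.sin_antiperiodic.add_nat_mul_eq n, Complex.sin_pi_div_two]
  simp

lemma deriv_riemannZeta_neg_even (n : ℕ) (hn : 0 < n) :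
    deriv riemannZeta (-2 * (n : ℂ)) =
      (-1) ^ n * π * (2 * π : ℂ) ^ (-(2 * (n : ℂ) + 1)) * ((2 * n).factorial : ℂ) *
        riemannZeta (2 * (n : ℂ) + 1) := by
  set a : ℂ := 2 * (n : ℂ) + 1 with ha
  have hre : 1 < a.re := by
    have : (0 : ℝ) < n := by exact_mod_cast hn
    simp [ha, this]
  have ha1 : a ≠ 1 := by rintro h; rw [h] at hre; simp at hre
  have haΓ (m : ℕ) : a ≠ -m := by
    rintro h; rw [h] at hre; simp at hre; linarith [(Nat.cast_nonneg m : (0 : ℝ) ≤ m)]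
  have hpi : (2 * π : ℂ) ≠ 0 := by simp [Real.pi_ne_zero]
  have hL : HasDerivAt (fun s : ℂ ↦ riemannZeta (1 - s)) (-deriv riemannZeta (-2 * (n : ℂ))) a := by
    have h1 : 1 - a = -2 * (n : ℂ) := by rw [ha]; ring
    have h2 : (1 - a) ≠ 1 := by
      intro h
      have : a = 0 := by linear_combination -h
      rw [this] at hre; norm_num at hre
    have := (differentiableAt_riemannZeta h2).hasDerivAt.comp a ((hasDerivAt_id a).const_sub 1)
    rw [h1] at this
    simpa [Function.comp_def] using this
  have hA : DifferentiableAt ℂ (fun s : ℂ ↦ 2 * (2 * π : ℂ) ^ (-s) * Complex.Gamma s) a :=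
    (((differentiableAt_id.neg).const_cpow (Or.inl hpi)).const_mul 2).mul
      (Complex.differentiableAt_Gamma a haΓ)
  have hC : HasDerivAt (fun s : ℂ ↦ Complex.cos (π * s / 2))
      (-Complex.sin (π * a / 2) * (π / 2)) a := by
    have := (((hasDerivAt_id a).const_mul (π : ℂ)).div_const 2).ccos
    simpa using this
  have hR := (hA.hasDerivAt.mul hC).mul (differentiableAt_riemannZeta ha1).hasDerivAt
  have hev : (fun s : ℂ ↦ riemannZeta (1 - s)) =ᶠ[nhds a] fun s ↦
      2 * (2 * π : ℂ) ^ (-s) * Complex.Gamma s * Complex.cos (π * s / 2) * riemannZeta s := by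
    filter_upwards [(isOpen_lt continuous_const Complex.continuous_re).mem_nhds hre] with s hs
    have hs : 1 < s.re := hs
    refine riemannZeta_one_sub (fun m h ↦ ?_) (fun h ↦ ?_)
    · rw [h] at hs; simp at hs; linarith [(Nat.cast_nonneg m : (0 : ℝ) ≤ m)]
    · rw [h] at hs; simp at hs
  have key := hL.unique (hR.congr_of_eventuallyEq hev)
  have hΓ : Complex.Gamma a = ((2 * n).factorial : ℂ) := by
    rw [← Complex.Gamma_nat_eq_factorial]; push_cast; rfl
  simp only [Pi.mul_apply] at key
  rw [show Complex.cos (π * a / 2) = 0 from cos_pi_mul_odd_div_two n,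
    show Complex.sin (π * a / 2) = (-1) ^ n from sin_pi_mul_odd_div_two n, hΓ] at key
  linear_combination -key

/-- For every positive integer `n`,
`1/ζ'(-2n) = (-1)^n · π^(2n) · 2^(2n+1) / (ζ(2n+1) · (2n)!)`. -/
theorem riesz_deriv_zeta_neg_even (n : ℕ) (hn : 0 < n) :
    1 / deriv riemannZeta (-2 * (n : ℂ)) =
      ((-1) ^ n * (π : ℂ) ^ (2 * n) * 2 ^ (2 * n + 1)) /
        (riemannZeta (2 * (n : ℂ) + 1) * ((2 * n).factorial : ℂ)) := by
  have hpi : (π : ℂ) ≠ 0 := by simp [Real.pi_ne_zero]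
  have hz : riemannZeta (2 * (n : ℂ) + 1) ≠ 0 :=
    riemannZeta_ne_zero_of_one_le_re (by simp)
  have hf : ((2 * n).factorial : ℂ) ≠ 0 := by exact_mod_cast (2 * n).factorial_ne_zero
  have hpow : (2 * π : ℂ) ^ (-(2 * (n : ℂ) + 1)) = ((2 * π : ℂ) ^ (2 * n + 1))⁻¹ := by
    rw [Complex.cpow_neg, ← Complex.cpow_natCast]; push_cast; rfl
  have hsq : ((-1 : ℂ) ^ n) * (-1) ^ n = 1 := by rw [← mul_pow]; simp
  rw [deriv_riemannZeta_neg_even n hn, hpow, mul_pow, div_eq_div_iff (by simp [*]) (by simp [*])]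
  field_simp
  linear_combination (-(π : ℂ) ^ (2 * n + 1)) * hsq
end

section
/- For every real a > 0 and every real b, ∫_0^∞ e^{-ax} cos(b√x) dx = (1/a) ∑_{n≥0} (n!/(2n)!) · (-b²/a)^n, where both the integral and the series converge. -/
/-!
Expand `cos (b√x) = ∑ (-b²)ⁿ xⁿ / (2n)!` and integrate term by term against `e^{-ax}`, using the
Gamma integral `∫₀^∞ xⁿ e^{-ax} dx = n! / a^{n+1}`. The interchange is justified by absolute
summability: the `L¹` norms of the terms are `(1/a) (n!/(2n)!) (b²/a)ⁿ`, and `(n!)² ≤ (2n)!` bounds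
them by the terms of an exponential series.
-/

open MeasureTheory

lemma integral_pow_mul_exp_neg_mul (a : ℝ) (ha : 0 < a) (n : ℕ) :
    ∫ x in Set.Ioi (0 : ℝ), x ^ n * Real.exp (-a * x) = n.factorial / a ^ (n + 1) := by
  have h := Real.integral_rpow_mul_exp_neg_mul_Ioi (a := (n : ℝ) + 1) (by positivity) ha
  rw [Real.Gamma_nat_eq_factorial] at h
  have e : (1 / a) ^ ((n : ℝ) + 1) = (1 / a) ^ (n + 1) := by
    rw [← Real.rpow_natCast]; push_cast; rfl
  simp only [add_sub_cancel_right, Real.rpow_natCast, e] at h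
  simp only [neg_mul]
  rw [h, one_div, inv_pow]
  field_simp

lemma integrableOn_pow_mul_exp_neg_mul (a : ℝ) (ha : 0 < a) (n : ℕ) :
    IntegrableOn (fun x : ℝ => x ^ n * Real.exp (-a * x)) (Set.Ioi 0) :=
  -- a non-integrable function would have Bochner integral zero
  .of_integral_ne_zero (by rw [integral_pow_mul_exp_neg_mul a ha]; positivity)

lemma summable_factorial_div_factorial_mul_pow (z : ℝ) :
    Summable (fun n : ℕ => ((n.factorial : ℝ) / ((2 * n).factorial : ℝ)) * z ^ n) := by
  refine Summable.of_norm_bounded (Real.summable_pow_div_factorial |z|) fun n => ?_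
  have h : (n.factorial : ℝ) * n.factorial ≤ (2 * n).factorial := by
    have := Nat.le_of_dvd (Nat.factorial_pos _) (Nat.factorial_mul_factorial_dvd_factorial_add n n)
    rw [← two_mul] at this
    exact_mod_cast this
  rw [norm_mul, norm_pow, Real.norm_eq_abs z, Real.norm_of_nonneg (by positivity),
    div_mul_eq_mul_div, div_le_div_iff₀ (by positivity) (by positivity)]
  nlinarith [mul_le_mul_of_nonneg_left h (pow_nonneg (abs_nonneg z) n)]

/-- For every real `a > 0` and real `b`,
`∫_0^∞ e^{-ax} cos(b√x) dx = (1/a) ∑_{n≥0} (n!/(2n)!) (-b²/a)^n`,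
where the integral converges and the series converges. -/
theorem integral_exp_cos_sqrt (a b : ℝ) (ha : 0 < a) :
    ∃ S : ℝ,
      HasSum (fun n : ℕ => ((n.factorial : ℝ) / ((2 * n).factorial : ℝ)) * (-b ^ 2 / a) ^ n) S ∧
      IntegrableOn (fun x : ℝ => Real.exp (-a * x) * Real.cos (b * Real.sqrt x))
        (Set.Ioi 0) ∧
      (∫ x in Set.Ioi (0 : ℝ), Real.exp (-a * x) * Real.cos (b * Real.sqrt x)) = (1 / a) * S := by
  have hsum := summable_factorial_div_factorial_mul_pow (-b ^ 2 / a)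
  refine ⟨_, hsum.hasSum, ?_, ?_⟩
  · have h0 := integrableOn_pow_mul_exp_neg_mul a ha 0
    simp only [pow_zero, one_mul] at h0
    refine Integrable.mono' h0 (by fun_prop) (.of_forall fun x => ?_)
    rw [norm_mul, Real.norm_eq_abs, Real.norm_eq_abs, Real.abs_exp]
    exact mul_le_of_le_one_right (Real.exp_pos _).le (Real.abs_cos_le_one _)
  · set F : ℕ → ℝ → ℝ := fun n x =>
      ((-b ^ 2) ^ n / ((2 * n).factorial : ℝ)) * (x ^ n * Real.exp (-a * x)) with hF
    have hint : ∀ n, Integrable (F n) (volume.restrict (Set.Ioi 0)) := fun n =>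
      (integrableOn_pow_mul_exp_neg_mul a ha n).const_mul _
    have hval : ∀ n, ∫ x in Set.Ioi (0 : ℝ), F n x =
        (1 / a) * (((n.factorial : ℝ) / ((2 * n).factorial : ℝ)) * (-b ^ 2 / a) ^ n) := by
      intro n
      simp only [hF]
      rw [integral_const_mul, integral_pow_mul_exp_neg_mul a ha, div_pow]
      field_simp
      ring
    -- each term has constant sign on the half-line, so its norm is the absolute value of `hval`
    have hnorm : ∀ n, ∫ x in Set.Ioi (0 : ℝ), ‖F n x‖ =
        ‖(1 / a) * (((n.factorial : ℝ) / ((2 * n).factorial : ℝ)) * (-b ^ 2 / a) ^ n)‖ := by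
      intro n
      rw [← hval n]
      simp only [hF]
      rw [integral_const_mul, norm_mul, integral_pow_mul_exp_neg_mul a ha,
        Real.norm_of_nonneg (show 0 ≤ (n.factorial : ℝ) / a ^ (n + 1) by positivity),
        ← integral_pow_mul_exp_neg_mul a ha, ← integral_const_mul]
      refine setIntegral_congr_fun measurableSet_Ioi fun x hx => ?_
      have hx' : (0 : ℝ) < x := hx
      simp only [norm_mul ((-b ^ 2) ^ n / ((2 * n).factorial : ℝ))]
      rw [Real.norm_of_nonneg (show 0 ≤ x ^ n * Real.exp (-a * x) by positivity)]
    have key := hasSum_integral_of_summable_integral_norm hint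
      (by simpa only [hnorm] using (hsum.mul_left (1 / a)).norm)
    simp only [hval] at key
    rw [(hsum.hasSum.mul_left (1 / a)).unique key]
    refine setIntegral_congr_fun measurableSet_Ioi fun x hx => ?_
    have hx' : (0 : ℝ) < x := hx
    have hc := (Real.hasSum_cos (b * Real.sqrt x)).mul_left (Real.exp (-a * x))
    refine hc.tsum_eq.symm.trans (tsum_congr fun n => ?_)
    simp only [hF]
    rw [pow_mul (b * √x), mul_pow, Real.sq_sqrt hx'.le, mul_pow, neg_pow (b ^ 2)]
    ring
end

section
/- The entire function F(z) = z ∑_{n≥1} (μ(n)/n²) e^{-z/n²} of the complex variable z has infinitely many non-real zeros; that is, the set {z ∈ ℂ : F(z) = 0 and z ∉ ℝ} is infinite. -/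
/-!
Write `F z = z * G z` with `G z = ∑ μ(n) n⁻² e^{-z/n²}`. Then `G` is entire of exponential type,
`G 0 = 1 / ζ(2) ≠ 0`, and `G` is bounded on the imaginary axis, since there every exponential has
modulus `1`. Suppose that `G` has only finitely many non-real zeros.

On a disc of radius `S` write `G z = ∏ (1 - z / ρ) * q z` over the zeros `ρ` in the disc, with `q`
zero-free there (`exists_zero_factorization`). On the circle of radius `2 * S` the product has
modulus at least `1`, so `q` inherits the bound `e^{O(S)}`. Borel–Carathéodory bounds a logarithm of
`q`; in the symmetrised logarithm of `q z * q (-z)` the linear term cancels, so that logarithm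
differs from its value at `0` by `O(‖z‖² / S)` (`norm_symm_log_le`, `cofactor_symm_sub_le`). This
plays the role of Hadamard's factorisation theorem.

At `z = iy` a pair of factors gives `1 + y² / ρ²`, of modulus at least `1` when `ρ` is real, and
also when `ρ` is one of the finitely many non-real zeros and `y` is large. Hence a single zero forces
`‖G (iy) * G (-iy)‖` to grow like `y²`, against boundedness. So `G` has no zeros, `q = G` for every
`S`, and `G z * G (-z) = G 0 ^ 2` (`mul_neg_eq_of_nonreal_zeros_bounded`). Differentiating twice at
`0` gives `G 0 * G'' 0 = (G' 0)²`, that is `ζ(4)² = ζ(2) ζ(6)`, which contradicts the values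
`π² / 6`, `π⁴ / 90`, `π⁶ / 945`.
-/

open ArithmeticFunction

/-- The entire extension of the Riesz function,
`F(z) = z ∑_{n≥1} (μ(n)/n²) e^{-z/n²}`. -/
noncomputable def rieszEntire (z : ℂ) : ℂ :=
  z * ∑' n : ℕ, ((moebius (n + 1) : ℂ) / ((n + 1 : ℕ) : ℂ) ^ 2) *
    Complex.exp (-z / ((n + 1 : ℕ) : ℂ) ^ 2)

section RieszAux

open Metric Set

/-! ### Logarithms of zero-free functions on a disc -/

lemma exists_log_on_ball {q : ℂ → ℂ} {S : ℝ} (hS : 0 < S) (hq : DifferentiableOn ℂ q (ball 0 S))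
    (h0 : ∀ z ∈ ball (0 : ℂ) S, q z ≠ 0) :
    ∃ L : ℂ → ℂ, DifferentiableOn ℂ L (ball 0 S) ∧ L 0 = 0 ∧
      ∀ z ∈ ball (0 : ℂ) S, q z = q 0 * Complex.exp (L z) := by
  have h0m : (0 : ℂ) ∈ ball (0 : ℂ) S := by simpa using hS
  have hd : DifferentiableOn ℂ (fun z => deriv q z / q z) (ball 0 S) :=
    (hq.deriv isOpen_ball).div hq h0
  obtain ⟨L, hL⟩ := hd.isExactOn_ball
  have hLd : DifferentiableOn ℂ L (ball 0 S) := fun z hz =>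
    (hL z hz).differentiableAt.differentiableWithinAt
  refine ⟨fun z => L z - L 0, hLd.sub_const _, by simp, fun z hz => ?_⟩
  -- `L` is a primitive of `q' / q`, so `q * exp (-L)` is locally constant.
  have hder : ∀ w ∈ ball (0 : ℂ) S, HasDerivAt (fun w => q w * Complex.exp (-L w)) 0 w := by
    intro w hw
    have h1 := ((hq w hw).differentiableAt (isOpen_ball.mem_nhds hw)).hasDerivAt.mul
      (hL w hw).neg.cexp
    convert! h1 using 1
    have := h0 w hw
    field_simp
    ring
  have hconst := isOpen_ball.is_const_of_deriv_eq_zero (convex_ball (0 : ℂ) S).isPreconnected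
    (fun w hw => (hder w hw).differentiableAt.differentiableWithinAt)
    (fun w hw => (hder w hw).deriv) hz h0m
  simp only [Complex.exp_neg, Complex.exp_sub] at hconst ⊢
  have := Complex.exp_ne_zero (L z)
  have := Complex.exp_ne_zero (L 0)
  field_simp at hconst ⊢
  linear_combination hconst

/-- A zero-free `q` on a disc of radius `S` whose growth is at most `e ^ M` satisfies
`q z * q (-z) = q 0 ^ 2 * e ^ E` with `E = O(M ‖z‖² / S²)`: Borel–Carathéodory bounds a logarithm
`L` of `q / q 0`, and `L z + L (-z)` vanishes to second order at `0`, so the second-order Schwarz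
lemma applies. -/
lemma norm_symm_log_le {q : ℂ → ℂ} {S M : ℝ} (hS : 0 < S) (hM : 0 < M)
    (hq : DifferentiableOn ℂ q (ball 0 S)) (h0 : ∀ z ∈ ball (0 : ℂ) S, q z ≠ 0)
    (hb : ∀ z ∈ ball (0 : ℂ) S, ‖q z‖ ≤ ‖q 0‖ * Real.exp M) {z : ℂ} (hz : ‖z‖ < S / 2) :
    ∃ E : ℂ, q z * q (-z) = q 0 ^ 2 * Complex.exp E ∧ ‖E‖ ≤ 16 * M * ‖z‖ ^ 2 / S ^ 2 := by
  obtain ⟨L, hL, hL0, hLq⟩ := exists_log_on_ball hS hq h0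
  have hq0 : 0 < ‖q 0‖ := norm_pos_iff.2 (h0 0 (by simpa using hS))
  have hmem : ∀ {w : ℂ}, ‖w‖ < S / 2 → w ∈ ball (0 : ℂ) S := fun {w} hw => by
    rw [mem_ball_zero_iff]; linarith
  have hbc : ∀ w : ℂ, ‖w‖ < S / 2 → ‖L w‖ ≤ 2 * M := by
    intro w hw
    refine (Complex.borelCaratheodory_zero hM hL (fun x hx => ?_) hS (hmem hw) hL0).trans ?_
    · have := hb x hx
      rw [hLq x hx, norm_mul, Complex.norm_exp] at this
      exact Real.exp_le_exp.1 (le_of_mul_le_mul_left this hq0)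
    · rw [div_le_iff₀ (by linarith)]
      nlinarith [norm_nonneg w]
  refine ⟨L z + L (-z), ?_, ?_⟩
  · rw [hLq z (hmem hz), hLq (-z) (hmem (by simpa using hz)), Complex.exp_add]
    ring
  · have hLn : DifferentiableOn ℂ (fun w => L (-w)) (ball 0 S) :=
      hL.comp (by fun_prop) (fun w hw => by simpa using hw)
    have hE : DifferentiableOn ℂ (fun w => L w + L (-w)) (ball 0 (S / 2)) :=
      (hL.add hLn).mono (ball_subset_ball (by linarith))
    have hmaps : MapsTo (fun w => L w + L (-w)) (ball 0 (S / 2))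
        (closedBall (L 0 + L (-0)) (4 * M)) := by
      intro w hw
      rw [mem_ball_zero_iff] at hw
      have h1 := hbc w hw
      have h2 := hbc (-w) (by simpa using hw)
      simp only [neg_zero, hL0, add_zero, mem_closedBall_zero_iff]
      exact (norm_add_le _ _).trans (by linarith)
    have hder : HasDerivAt (fun w => L w + L (-w)) 0 0 := by
      have h1 := (hL.differentiableAt (ball_mem_nhds 0 hS)).hasDerivAt
      have h2 : HasDerivAt L (deriv L 0) (-0) := by simpa using h1
      have := h1.add (h2.comp (0 : ℂ) (hasDerivAt_neg (0 : ℂ)))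
      convert! this using 1
      simp
    have ho := hasDerivAt_iff_isLittleO.1 hder
    have key := Complex.dist_le_mul_div_pow_of_mapsTo_ball_of_isLittleO (n := 1) hE hmaps
      (by simpa using ho.norm_right) (z := z) (by simpa using hz)
    simp only [neg_zero, hL0, add_zero, dist_zero_right] at key
    refine key.trans_eq ?_
    rw [show ‖z‖ / (S / 2) = 2 * ‖z‖ / S by field_simp]
    ring

/-! ### Removing finitely many zeros of an entire function -/

lemma differentiable_iterate_dslope {f : ℂ → ℂ} (hf : Differentiable ℂ f) (c : ℂ) (n : ℕ) :
    Differentiable ℂ ((Function.swap dslope c)^[n] f) := by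
  induction n with
  | zero => simpa using hf
  | succ n ih =>
    rw [Function.iterate_succ_apply']
    exact differentiableOn_univ.1
      ((Complex.differentiableOn_dslope Filter.univ_mem).2 ih.differentiableOn)

lemma finite_zeros_closedBall {f : ℂ → ℂ} (hf : Differentiable ℂ f) (h0 : f 0 ≠ 0) (S : ℝ) :
    {z : ℂ | f z = 0 ∧ ‖z‖ ≤ S}.Finite := by
  have ha : AnalyticOnNhd ℂ f univ := fun z _ => hf.analyticAt z
  have h := ha.preimage_zero_mem_codiscrete h0
  refine ((isCompact_closedBall (0 : ℂ) S).finite_sdiff_of_mem_codiscreteWithin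
    (Filter.codiscreteWithin_mono (subset_univ _) h)).subset fun z hz => ?_
  exact ⟨mem_closedBall_zero_iff.2 hz.2, by simp [hz.1]⟩

lemma exists_dvd_zero {f : ℂ → ℂ} (hf : Differentiable ℂ f) (h0 : f 0 ≠ 0) {ρ : ℂ} (hρ : f ρ = 0) :
    ∃ (n : ℕ) (g : ℂ → ℂ), Differentiable ℂ g ∧ g ρ ≠ 0 ∧ ∀ z, f z = (1 - z / ρ) ^ n * g z := by
  have hρ0 : ρ ≠ 0 := by rintro rfl; exact h0 hρ
  obtain ⟨p, hp⟩ := hf.analyticAt ρ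
  have hp0 : p ≠ 0 := by
    intro h
    have hev := hp.locally_zero_iff.2 h
    have ha : AnalyticOnNhd ℂ f univ := fun z _ => hf.analyticAt z
    exact h0 (ha.eqOn_zero_of_preconnected_of_eventuallyEq_zero isPreconnected_univ
      (mem_univ ρ) hev (mem_univ 0))
  refine ⟨p.order, fun z => (-ρ) ^ p.order * (Function.swap dslope ρ)^[p.order] f z,
    (differentiable_iterate_dslope hf ρ _).const_mul _,
    mul_ne_zero (pow_ne_zero _ (neg_ne_zero.2 hρ0)) (hp.iterate_dslope_fslope_ne_zero hp0),
    fun z => ?_⟩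
  rw [hp.eq_pow_order_mul_iterate_dslope z, ← mul_assoc, ← mul_pow, smul_eq_mul]
  congr 2
  field_simp
  ring

/-- Division of an entire function by its zeros (with multiplicity) in a closed disc, each zero
contributing a factor normalised to be `1` at the origin. -/
lemma exists_zero_factorization {f : ℂ → ℂ} (hf : Differentiable ℂ f) (h0 : f 0 ≠ 0) (S : ℝ) :
    ∃ (s : Multiset ℂ) (q : ℂ → ℂ), Differentiable ℂ q ∧ (∀ ρ ∈ s, f ρ = 0 ∧ ‖ρ‖ ≤ S) ∧
      (∀ z, f z = (s.map fun ρ => 1 - z / ρ).prod * q z) ∧ ∀ z, ‖z‖ ≤ S → q z ≠ 0 := by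
  induction hn : {z : ℂ | f z = 0 ∧ ‖z‖ ≤ S}.ncard generalizing f with
  | zero =>
    rw [ncard_eq_zero (finite_zeros_closedBall hf h0 S), eq_empty_iff_forall_notMem] at hn
    exact ⟨0, f, hf, by simp, by simp, fun z hz h => hn z ⟨h, hz⟩⟩
  | succ n ih =>
    have hfin := finite_zeros_closedBall hf h0 S
    obtain ⟨ρ, hρ⟩ := nonempty_of_ncard_ne_zero (by omega : {z : ℂ | f z = 0 ∧ ‖z‖ ≤ S}.ncard ≠ 0)
    obtain ⟨m, g, hg, hgρ, hfg⟩ := exists_dvd_zero hf h0 hρ.1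
    have hgf : ∀ z, g z = 0 → f z = 0 := fun z hz => by rw [hfg, hz, mul_zero]
    have hset : {z : ℂ | g z = 0 ∧ ‖z‖ ≤ S} = {z : ℂ | f z = 0 ∧ ‖z‖ ≤ S} \ {ρ} := by
      have hρ0 : ρ ≠ 0 := by rintro rfl; exact h0 hρ.1
      ext z
      simp only [mem_ofPred_eq, mem_sdiff, mem_singleton_iff]
      constructor
      · rintro ⟨h1, h2⟩
        exact ⟨⟨hgf z h1, h2⟩, fun h => hgρ (h ▸ h1)⟩
      · rintro ⟨⟨h1, h2⟩, h3⟩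
        rw [hfg] at h1
        refine ⟨(mul_eq_zero.1 h1).resolve_left (pow_ne_zero _ fun h => h3 ?_), h2⟩
        field_simp at h
        linear_combination -h
    obtain ⟨s, q, hq, hs, hgq, hq0⟩ := ih hg (fun h => h0 (hgf 0 h)) (by
      rw [hset, ncard_sdiff_singleton_of_mem hρ, hn]; rfl)
    refine ⟨Multiset.replicate m ρ + s, q, hq, fun x hx => ?_, fun z => ?_, hq0⟩
    · rcases Multiset.mem_add.1 hx with h | h
      · rw [Multiset.eq_of_mem_replicate h]; exact hρ
      · exact ⟨hgf x (hs x h).1, (hs x h).2⟩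
    · rw [hfg, hgq]; simp [mul_assoc]

/-! ### Entire functions bounded on the imaginary axis -/

lemma one_le_norm_prod_map {s : Multiset ℂ} {g : ℂ → ℂ} (h : ∀ ρ ∈ s, 1 ≤ ‖g ρ‖) :
    1 ≤ ‖(s.map g).prod‖ := by
  induction s using Multiset.induction_on with
  | empty => simp
  | cons a s ih =>
    rw [Multiset.map_cons, Multiset.prod_cons, norm_mul]
    exact one_le_mul_of_one_le_of_one_le (h a (Multiset.mem_cons_self a s))
      (ih fun ρ hρ => h ρ (Multiset.mem_cons_of_mem hρ))

/-- For an entire function of exponential type, the zero-free cofactor `q` on the disc of radius `S`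
satisfies `q z * q (-z) → f 0 ^ 2` as `S → ∞`, for each fixed `z`. Growth of order less than `2` is
what makes the error term `O(‖z‖² / S)` vanish in the limit. -/
lemma cofactor_symm_sub_le {f : ℂ → ℂ} (h0 : f 0 ≠ 0) {A : ℝ}
    (hA : ∀ z, ‖f z‖ ≤ A * Real.exp ‖z‖) (z : ℂ) {ε : ℝ} (hε : 0 < ε) :
    ∃ S₀ : ℝ, ∀ S ≥ S₀, ∀ (s : Multiset ℂ) (q : ℂ → ℂ), Differentiable ℂ q →
      (∀ ρ ∈ s, f ρ = 0 ∧ ‖ρ‖ ≤ S) → (∀ z, f z = (s.map fun ρ => 1 - z / ρ).prod * q z) →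
      (∀ z, ‖z‖ ≤ S → q z ≠ 0) → ‖q z * q (-z) - f 0 ^ 2‖ ≤ ε * ‖f 0‖ ^ 2 := by
  have hf0 : 0 < ‖f 0‖ := norm_pos_iff.2 h0
  have hA0 : 0 < A := hf0.trans_le (by simpa using hA 0)
  set c : ℝ := |Real.log (A / ‖f 0‖)| with hc
  set δ : ℝ := min 1 (ε / 2) with hδ
  have hδ0 : 0 < δ := by positivity
  refine ⟨max (max 1 (2 * ‖z‖ + 1)) (16 * (2 + c) * ‖z‖ ^ 2 / δ), fun S hS s q hq hs hfq hq0 => ?_⟩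
  have hS1 : 1 ≤ S := ((le_max_left _ _).trans (le_max_left _ _)).trans hS
  have hS2 : 2 * ‖z‖ + 1 ≤ S := ((le_max_right _ _).trans (le_max_left _ _)).trans hS
  have hS3 : 16 * (2 + c) * ‖z‖ ^ 2 / δ ≤ S := (le_max_right _ _).trans hS
  have hS0 : 0 < S := by linarith
  have hq00 : q 0 = f 0 := by rw [hfq 0]; simp
  -- The linear factors have modulus at least `1` on the circle of radius `2 * S`.
  have hcirc : ∀ w : ℂ, ‖w‖ = 2 * S → ‖q w‖ ≤ A * Real.exp (2 * S) := by
    intro w hw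
    have hp : 1 ≤ ‖(s.map fun ρ => 1 - w / ρ).prod‖ := by
      refine one_le_norm_prod_map fun ρ hρ => ?_
      have hρ0 : 0 < ‖ρ‖ := norm_pos_iff.2 (by rintro rfl; exact h0 (hs 0 hρ).1)
      have h2 : 2 ≤ ‖w / ρ‖ := by
        rw [norm_div, hw, le_div_iff₀ hρ0]; linarith [(hs ρ hρ).2]
      have := norm_sub_norm_le (w / ρ) 1
      rw [norm_sub_rev, norm_one] at this
      linarith
    calc ‖q w‖ ≤ ‖(s.map fun ρ => 1 - w / ρ).prod‖ * ‖q w‖ :=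
          le_mul_of_one_le_left (norm_nonneg _) hp
      _ = ‖f w‖ := by rw [hfq w, norm_mul]
      _ ≤ A * Real.exp (2 * S) := by rw [← hw]; exact hA w
  have hM : 0 < 2 * S + c := by positivity
  -- The maximum principle carries the bound on the circle into the smaller disc.
  have hb : ∀ w ∈ ball (0 : ℂ) S, ‖q w‖ ≤ ‖q 0‖ * Real.exp (2 * S + c) := by
    intro w hw
    rw [mem_ball_zero_iff] at hw
    have h1 : ‖q w‖ ≤ A * Real.exp (2 * S) := by
      refine Complex.norm_le_of_forall_mem_frontier_norm_le (U := ball (0 : ℂ) (2 * S))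
        isBounded_ball hq.diffContOnCl (fun x hx => hcirc x ?_) (subset_closure ?_)
      · rw [frontier_ball _ (by positivity)] at hx
        simpa using hx
      · rw [mem_ball_zero_iff]; linarith
    refine h1.trans ?_
    have h2 : A / ‖f 0‖ ≤ Real.exp c := by
      rw [← Real.exp_log (div_pos hA0 hf0)]
      exact Real.exp_le_exp.2 (le_abs_self _)
    rw [div_le_iff₀ hf0] at h2
    rw [hq00, Real.exp_add]
    nlinarith [Real.exp_pos (2 * S)]
  obtain ⟨E, hE, hEn⟩ := norm_symm_log_le hS0 hM hq.differentiableOn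
    (fun w hw => hq0 w (mem_ball_zero_iff.1 hw).le) hb (z := z) (by linarith)
  have hEδ : ‖E‖ ≤ δ := by
    refine hEn.trans ?_
    rw [div_le_iff₀ (by positivity)]
    rw [div_le_iff₀ hδ0] at hS3
    have hc0 : 0 ≤ c := abs_nonneg _
    calc 16 * (2 * S + c) * ‖z‖ ^ 2 ≤ 16 * ((2 + c) * S) * ‖z‖ ^ 2 := by gcongr; nlinarith
      _ = (16 * (2 + c) * ‖z‖ ^ 2) * S := by ring
      _ ≤ (S * δ) * S := by gcongr
      _ = δ * S ^ 2 := by ring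
  have hexp := Complex.norm_exp_sub_one_le (hEδ.trans (min_le_left _ _))
  rw [hE, hq00, show f 0 ^ 2 * Complex.exp E - f 0 ^ 2 = f 0 ^ 2 * (Complex.exp E - 1) by ring,
    norm_mul, norm_pow, mul_comm]
  gcongr
  linarith [hEδ.trans (min_le_right _ _)]

/-- The factors of one zero `ρ` at `iy` and `-iy` combine to `1 + y² / ρ²`, which has modulus at least
`1` for every real `ρ`. -/
lemma pair_factor_eq {ρ : ℂ} (hρ : ρ ≠ 0) (y : ℝ) :
    (1 - y * Complex.I / ρ) * (1 - -(y * Complex.I) / ρ) = 1 + (y : ℂ) ^ 2 / ρ ^ 2 := by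
  field_simp
  linear_combination (-(y : ℂ) ^ 2) * Complex.I_sq

lemma le_norm_pair_factor {ρ : ℂ} (hρ : ρ ≠ 0) (y : ℝ) :
    y ^ 2 / ‖ρ‖ ^ 2 - 1 ≤ ‖(1 - y * Complex.I / ρ) * (1 - -(y * Complex.I) / ρ)‖ := by
  have h2 : ‖(y : ℂ) ^ 2 / ρ ^ 2‖ = y ^ 2 / ‖ρ‖ ^ 2 := by
    rw [norm_div, norm_pow, norm_pow, Complex.norm_real, Real.norm_eq_abs, sq_abs]
  have := norm_sub_norm_le ((y : ℂ) ^ 2 / ρ ^ 2) (-1)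
  rwa [sub_neg_eq_add, add_comm _ (1 : ℂ), norm_neg, norm_one, h2, ← pair_factor_eq hρ] at this

/-- An entire function of exponential type that is bounded on the imaginary axis and whose non-real
zeros are bounded has no zeros at all and satisfies `f z * f (-z) = f 0 ^ 2` (so it is
`c * exp (a * z)`). Each real zero makes `‖f (iy) * f (-iy)‖` larger, each non-real one does so for
large `y`, and a single zero already makes it grow like `y ^ 2`. -/
theorem mul_neg_eq_of_nonreal_zeros_bounded {f : ℂ → ℂ} (hf : Differentiable ℂ f) (h0 : f 0 ≠ 0)
    {A T : ℝ} (hA : ∀ z, ‖f z‖ ≤ A * Real.exp ‖z‖) (hI : ∀ y : ℝ, ‖f (y * Complex.I)‖ ≤ A)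
    (hT : ∀ z, f z = 0 → z.im ≠ 0 → ‖z‖ ≤ T) (z : ℂ) : f z * f (-z) = f 0 ^ 2 := by
  have hf0 : 0 < ‖f 0‖ := norm_pos_iff.2 h0
  have hne : ∀ ρ, f ρ = 0 → 0 < ‖ρ‖ := fun ρ hρ =>
    norm_pos_iff.2 (by rintro rfl; exact h0 hρ)
  -- High up on the imaginary axis a pair of opposite points sees every factor with modulus `≥ 1`.
  have hfac : ∀ ρ, f ρ = 0 → ∀ y : ℝ, 2 * T ^ 2 ≤ y ^ 2 →
      1 ≤ ‖(1 - y * Complex.I / ρ) * (1 - -(y * Complex.I) / ρ)‖ := by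
    intro ρ hρ y hy
    have hρ0 := hne ρ hρ
    have hρ1 : ρ ≠ 0 := norm_pos_iff.1 hρ0
    rw [pair_factor_eq hρ1]
    by_cases him : ρ.im = 0
    · obtain ⟨r, rfl⟩ : ∃ r : ℝ, ρ = r := ⟨ρ.re, Complex.ext rfl (by simpa using him)⟩
      rw [show (1 : ℂ) + (y : ℂ) ^ 2 / (r : ℂ) ^ 2 = ((1 + y ^ 2 / r ^ 2 : ℝ) : ℂ) by push_cast; rfl,
        Complex.norm_real, Real.norm_eq_abs]
      have : 0 ≤ y ^ 2 / r ^ 2 := by positivity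
      exact le_trans (by linarith) (le_abs_self _)
    · have h1 := hT ρ hρ him
      have h2 : 2 ≤ y ^ 2 / ‖ρ‖ ^ 2 := by
        rw [le_div_iff₀ (by positivity)]
        nlinarith
      have := le_norm_pair_factor hρ1 y
      rw [pair_factor_eq hρ1] at this
      linarith
  have hzero : ∀ ρ, f ρ ≠ 0 := by
    intro ρ hρ
    have hρ0 := hne ρ hρ
    -- The factor of `ρ` alone forces growth beyond `A ^ 2`.
    obtain ⟨y, hy1, hy2⟩ : ∃ y : ℝ, 2 * T ^ 2 ≤ y ^ 2 ∧
        1 + 2 * (A ^ 2 + 1) / ‖f 0‖ ^ 2 ≤ y ^ 2 / ‖ρ‖ ^ 2 := by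
      have ht := (Filter.tendsto_pow_atTop (α := ℝ) two_ne_zero)
      obtain ⟨y, h1, h2⟩ := ((ht.eventually_ge_atTop (2 * T ^ 2)).and (ht.eventually_ge_atTop
        ((1 + 2 * (A ^ 2 + 1) / ‖f 0‖ ^ 2) * ‖ρ‖ ^ 2))).exists
      exact ⟨y, h1, (le_div_iff₀ (by positivity)).2 h2⟩
    obtain ⟨S₀, hS₀⟩ := cofactor_symm_sub_le h0 hA (y * Complex.I) (ε := 1 / 2) (by norm_num)
    obtain ⟨s, q, hq, hs, hfq, hq0⟩ := exists_zero_factorization hf h0 (max S₀ ‖ρ‖)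
    have hclose := hS₀ _ (le_max_left _ _) s q hq hs hfq hq0
    have hρs : ρ ∈ s := by
      have h1 : (s.map fun σ => 1 - ρ / σ).prod = 0 := by
        have := hfq ρ
        rw [hρ] at this
        exact (mul_eq_zero.1 this.symm).resolve_right (hq0 ρ (le_max_right _ _))
      obtain ⟨σ, hσ, h2⟩ := Multiset.mem_map.1 (Multiset.prod_eq_zero_iff.1 h1)
      have hσ0 : σ ≠ 0 := norm_pos_iff.1 (hne σ (hs σ hσ).1)
      have : ρ = σ := by
        field_simp at h2
        linear_combination -h2
      rwa [this]
    obtain ⟨t, rfl⟩ := Multiset.exists_cons_of_mem hρs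
    set w : ℂ := y * Complex.I with hw
    have hprod : f w * f (-w) = ((1 - w / ρ) * (1 - -w / ρ)) *
        (t.map fun σ => (1 - w / σ) * (1 - -w / σ)).prod * (q w * q (-w)) := by
      rw [hfq w, hfq (-w)]
      simp only [Multiset.map_cons, Multiset.prod_cons, Multiset.prod_map_mul]
      ring
    have ht : 1 ≤ ‖(t.map fun σ => (1 - w / σ) * (1 - -w / σ)).prod‖ := by
      refine one_le_norm_prod_map fun σ hσ => ?_
      exact hfac σ (hs σ (Multiset.mem_cons_of_mem hσ)).1 y hy1
    have hρf : 2 * (A ^ 2 + 1) / ‖f 0‖ ^ 2 ≤ ‖(1 - w / ρ) * (1 - -w / ρ)‖ := by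
      have hρ1 : ρ ≠ 0 := norm_pos_iff.1 hρ0
      linarith [le_norm_pair_factor hρ1 y]
    have hqq : ‖f 0‖ ^ 2 / 2 ≤ ‖q w * q (-w)‖ := by
      have := norm_sub_norm_le (f 0 ^ 2) (q w * q (-w))
      rw [norm_sub_rev, norm_pow] at this
      linarith
    have hup : ‖f w * f (-w)‖ ≤ A ^ 2 := by
      rw [norm_mul, sq]
      have h1 := hI y
      have h2 := hI (-y)
      rw [Complex.ofReal_neg, neg_mul] at h2
      exact mul_le_mul h1 h2 (norm_nonneg _) ((norm_nonneg _).trans h1)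
    have hlow : A ^ 2 + 1 ≤ ‖f w * f (-w)‖ := by
      rw [hprod, norm_mul, norm_mul]
      calc A ^ 2 + 1 = 2 * (A ^ 2 + 1) / ‖f 0‖ ^ 2 * 1 * (‖f 0‖ ^ 2 / 2) := by field_simp
        _ ≤ _ := by gcongr
    linarith
  -- Without zeros the cofactor is `f` itself, for every radius.
  have hall : ∀ ε > 0, ‖f z * f (-z) - f 0 ^ 2‖ ≤ ε := by
    intro ε hε
    obtain ⟨S₀, hS₀⟩ := cofactor_symm_sub_le h0 hA z (ε := ε / ‖f 0‖ ^ 2) (by positivity)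
    have := hS₀ S₀ le_rfl 0 f hf (by simp) (by simp) (fun w _ => hzero w)
    rwa [div_mul_cancel₀ _ (by positivity)] at this
  have : ‖f z * f (-z) - f 0 ^ 2‖ ≤ 0 := le_of_forall_pos_le_add fun ε hε => by simpa using hall ε hε
  exact sub_eq_zero.1 (norm_le_zero_iff.1 this)

/-! ### The Riesz function -/

/-- The family of series `∑_{n ≥ 1} μ(n) n^{-2k} e^{-z / n²}`. The Riesz function is
`z * rieszSum 1 z`, and `z`-differentiation shifts `k` by one, up to sign. As in `rieszEntire`, the
summation index is shifted to start at `0`. -/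
noncomputable def rieszSum (k : ℕ) (z : ℂ) : ℂ :=
  ∑' n : ℕ, ((moebius (n + 1) : ℂ) / ((n + 1 : ℕ) : ℂ) ^ (2 * k)) *
    Complex.exp (-z / ((n + 1 : ℕ) : ℂ) ^ 2)

lemma norm_rieszSum_coeff_le {k : ℕ} (hk : 1 ≤ k) (n : ℕ) :
    ‖(moebius (n + 1) : ℂ) / ((n + 1 : ℕ) : ℂ) ^ (2 * k)‖ ≤ 1 / ((n + 1 : ℕ) : ℝ) ^ 2 := by
  rw [norm_div, norm_pow, Complex.norm_natCast, Complex.norm_intCast]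
  have h1 : |((moebius (n + 1) : ℤ) : ℝ)| ≤ 1 := by
    exact_mod_cast abs_moebius_le_one (n := n + 1)
  have h2 : (1 : ℝ) ≤ ((n + 1 : ℕ) : ℝ) := by exact_mod_cast Nat.le_add_left 1 n
  gcongr
  · omega

lemma summable_inv_succ_sq : Summable fun n : ℕ => 1 / ((n + 1 : ℕ) : ℝ) ^ 2 :=
  (summable_nat_add_iff 1).2 (Real.summable_one_div_nat_pow.2 one_lt_two)

lemma norm_rieszSum_exp_le (n : ℕ) (z : ℂ) :
    ‖Complex.exp (-z / ((n + 1 : ℕ) : ℂ) ^ 2)‖ ≤ Real.exp ‖z‖ := by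
  rw [Complex.norm_exp]
  refine Real.exp_le_exp.2 ((Complex.re_le_norm _).trans ?_)
  rw [norm_div, norm_neg, norm_pow, Complex.norm_natCast]
  have h2 : (1 : ℝ) ≤ ((n + 1 : ℕ) : ℝ) := by exact_mod_cast Nat.le_add_left 1 n
  exact div_le_self (norm_nonneg _) (one_le_pow₀ h2)

lemma norm_rieszSum_term_le {k : ℕ} (hk : 1 ≤ k) (n : ℕ) (z : ℂ) :
    ‖((moebius (n + 1) : ℂ) / ((n + 1 : ℕ) : ℂ) ^ (2 * k)) *
      Complex.exp (-z / ((n + 1 : ℕ) : ℂ) ^ 2)‖ ≤ 1 / ((n + 1 : ℕ) : ℝ) ^ 2 * Real.exp ‖z‖ := by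
  rw [norm_mul]
  exact mul_le_mul (norm_rieszSum_coeff_le hk n) (norm_rieszSum_exp_le n z) (norm_nonneg _)
    (by positivity)

lemma hasDerivAt_rieszSum {k : ℕ} (hk : 1 ≤ k) (z : ℂ) :
    HasDerivAt (rieszSum k) (-rieszSum (k + 1) z) z := by
  set R : ℝ := ‖z‖ + 1
  have hz : z ∈ ball (0 : ℂ) R := by simp [R]
  have hu : Summable fun n : ℕ => 1 / ((n + 1 : ℕ) : ℝ) ^ 2 * Real.exp R :=
    summable_inv_succ_sq.mul_right _
  have hle : ∀ (n : ℕ) (w : ℂ), w ∈ ball (0 : ℂ) R →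
      ‖((moebius (n + 1) : ℂ) / ((n + 1 : ℕ) : ℂ) ^ (2 * k)) *
        Complex.exp (-w / ((n + 1 : ℕ) : ℂ) ^ 2)‖ ≤ 1 / ((n + 1 : ℕ) : ℝ) ^ 2 * Real.exp R := by
    intro n w hw
    refine (norm_rieszSum_term_le hk n w).trans ?_
    have := mem_ball_zero_iff.1 hw
    gcongr
  have hd : ∀ n : ℕ, DifferentiableOn ℂ (fun w : ℂ =>
      ((moebius (n + 1) : ℂ) / ((n + 1 : ℕ) : ℂ) ^ (2 * k)) *
        Complex.exp (-w / ((n + 1 : ℕ) : ℂ) ^ 2)) (ball 0 R) := fun n => by fun_prop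
  have h1 := Complex.hasSum_deriv_of_summable_norm hu hd isOpen_ball hle hz
  have h2 : DifferentiableAt ℂ (rieszSum k) z :=
    (Complex.differentiableOn_tsum_of_summable_norm hu hd isOpen_ball hle).differentiableAt
      (isOpen_ball.mem_nhds hz)
  convert! h2.hasDerivAt using 1
  change _ = deriv (fun w => ∑' n : ℕ, _) z
  rw [← h1.tsum_eq, rieszSum, ← tsum_neg]
  refine tsum_congr fun n => ?_
  have hn : ((n + 1 : ℕ) : ℂ) ≠ 0 := Nat.cast_ne_zero.2 n.succ_ne_zero
  have := ((hasDerivAt_id z).neg.div_const (((n + 1 : ℕ) : ℂ) ^ 2)).cexp.const_mul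
    ((moebius (n + 1) : ℂ) / ((n + 1 : ℕ) : ℂ) ^ (2 * k))
  refine Eq.trans ?_ this.deriv.symm
  simp only [id, Pi.neg_apply]
  field_simp
  ring

/-- The value at the origin is the Dirichlet series of `μ` at `2k`, that is `1 / ζ(2k)`. -/
lemma rieszSum_zero_mul_zeta {k : ℕ} (hk : 1 ≤ k) : rieszSum k 0 * riemannZeta (2 * k) = 1 := by
  have hre : 1 < (2 * k : ℂ).re := by
    have : (1 : ℝ) ≤ k := by exact_mod_cast hk
    simp; linarith
  have h := LSeries_zeta_mul_Lseries_moebius hre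
  rw [LSeries_zeta_eq_riemannZeta hre] at h
  rw [mul_comm, ← h]
  congr 1
  have hs := LSeriesSummable_moebius_iff.2 hre
  rw [LSeries, hs.tsum_eq_zero_add, LSeries.term_zero, zero_add, rieszSum]
  refine tsum_congr fun n => ?_
  rw [LSeries.term_of_ne_zero n.succ_ne_zero]
  simp only [neg_zero, zero_div, Complex.exp_zero, mul_one]
  congr 1
  have := Complex.cpow_natCast ((n + 1 : ℕ) : ℂ) (2 * k)
  push_cast at this ⊢
  exact this.symm

lemma riemannZeta_six : riemannZeta 6 = (Real.pi : ℂ) ^ 6 / 945 := by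
  have h := riemannZeta_two_mul_nat (k := 3) (by norm_num)
  have hb : bernoulli 6 = 1 / 42 := by
    have h5 : bernoulli' 5 = 0 := bernoulli'_eq_zero_of_odd (by decide) (by norm_num)
    rw [bernoulli_eq_bernoulli'_of_ne_one (by norm_num), bernoulli'_def]
    simp only [Finset.sum_range_succ, Finset.sum_range_zero, bernoulli'_zero, bernoulli'_one,
      bernoulli'_two, bernoulli'_three, bernoulli'_four, h5]
    norm_num [Nat.choose]
  norm_num [hb, Nat.factorial] at h
  rw [h]; ring

end RieszAux

/-- The entire function `F(z) = z ∑_{n≥1} (μ(n)/n²) e^{-z/n²}` has infinitely many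
non-real zeros. -/
theorem rieszEntire_infinite_nonreal_zeros :
    {z : ℂ | rieszEntire z = 0 ∧ z.im ≠ 0}.Infinite := by
  intro hfin
  obtain ⟨T, hT⟩ := hfin.isBounded.exists_norm_le
  have hF : ∀ z, rieszEntire z = z * rieszSum 1 z := fun z => rfl
  have z1 := rieszSum_zero_mul_zeta (k := 1) le_rfl
  have z2 := rieszSum_zero_mul_zeta (k := 2) (by norm_num)
  have z3 := rieszSum_zero_mul_zeta (k := 3) (by norm_num)
  norm_num [riemannZeta_two, riemannZeta_four, riemannZeta_six] at z1 z2 z3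
  have h0 : rieszSum 1 0 ≠ 0 := left_ne_zero_of_mul_eq_one z1
  set A : ℝ := ∑' n : ℕ, 1 / ((n + 1 : ℕ) : ℝ) ^ 2 with hA
  have hexp : ∀ z, ‖rieszSum 1 z‖ ≤ A * Real.exp ‖z‖ := fun z => by
    rw [hA, ← tsum_mul_right]
    exact tsum_of_norm_bounded (summable_inv_succ_sq.mul_right _).hasSum
      fun n => norm_rieszSum_term_le le_rfl n z
  have hI : ∀ y : ℝ, ‖rieszSum 1 (y * Complex.I)‖ ≤ A := fun y => by
    refine tsum_of_norm_bounded summable_inv_succ_sq.hasSum fun n => ?_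
    rw [norm_mul, Complex.norm_exp]
    have : (-(y * Complex.I) / ((n + 1 : ℕ) : ℂ) ^ 2).re = 0 := by
      rw [← Nat.cast_pow, Complex.div_natCast_re]; simp
    rw [this, Real.exp_zero, mul_one]
    exact norm_rieszSum_coeff_le le_rfl n
  have hsymm := mul_neg_eq_of_nonreal_zeros_bounded
    (fun z => (hasDerivAt_rieszSum le_rfl z).differentiableAt) h0 hexp hI
    (fun z hz him => hT z ⟨by rw [hF, hz, mul_zero], him⟩)
  -- Differentiating `G(z) G(-z) = G(0)²` twice at `0` gives `G(0) G''(0) = G'(0)²`.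
  have hneg : ∀ {k : ℕ}, 1 ≤ k → ∀ z, HasDerivAt (fun w => rieszSum k (-w))
      (rieszSum (k + 1) (-z)) z := fun {k} hk z => by
    simpa [Function.comp_def] using (hasDerivAt_rieszSum hk (-z)).comp z (hasDerivAt_neg z)
  have hd1 : ∀ z, -rieszSum 2 z * rieszSum 1 (-z) + rieszSum 1 z * rieszSum 2 (-z) = 0 := by
    intro z
    have h1 := (hasDerivAt_rieszSum le_rfl z).mul (hneg le_rfl z)
    have h2 : (rieszSum 1 * fun w => rieszSum 1 (-w)) = fun _ => rieszSum 1 0 ^ 2 :=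
      funext hsymm
    rw [h2] at h1
    exact h1.unique (hasDerivAt_const z _)
  have hd2 : rieszSum 3 0 * rieszSum 1 0 = rieszSum 2 0 ^ 2 := by
    have h1 := (((hasDerivAt_rieszSum (k := 2) (by norm_num) 0).neg.mul (hneg le_rfl 0)).add
      ((hasDerivAt_rieszSum le_rfl 0).mul (hneg (k := 2) (by norm_num) 0)))
    have h2 := h1.unique ((hasDerivAt_const (0 : ℂ) (0 : ℂ)).congr_of_eventuallyEq
      (Filter.Eventually.of_forall hd1))
    simp only [neg_zero, Pi.neg_apply, neg_neg] at h2
    linear_combination h2 / 2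
  have hpi : (Real.pi : ℂ) ≠ 0 := by exact_mod_cast Real.pi_ne_zero
  have e1 : rieszSum 1 0 = 6 / (Real.pi : ℂ) ^ 2 := by
    field_simp; linear_combination 6 * z1
  have e2 : rieszSum 2 0 = 90 / (Real.pi : ℂ) ^ 4 := by
    field_simp; linear_combination 90 * z2
  have e3 : rieszSum 3 0 = 945 / (Real.pi : ℂ) ^ 6 := by
    field_simp; linear_combination 945 * z3
  -- The identity now reads `945 * 6 = 90 ^ 2`.
  rw [e1, e2, e3] at hd2
  field_simp at hd2
  norm_num at hd2
end

section
/- For every real x, |x ∑_{n≥1} (μ(n)/n²) e^{-x/n²}| < |x| e^{|x|} whenever x ≠ 0. -/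
open ArithmeticFunction

/-!
Write `S = ∑_{n≥1} (μ(n)/n²) e^{-x/n²}`; the claim is `|S| < e^{|x|}`. Everything rests on the
telescoping bound `∑_{n>k} 1/n² ≤ 1/k` (`riesz_tail`).

* Lower bound: for `n ≥ 2` each term is at most `e^{|x|}/n²` in absolute value, so these terms add
  up to at least `-e^{|x|}`, while the term `n = 1` is `e^{-x} > 0`.
* Upper bound: let `E = max 1 (e^{-x/4})`. The terms `n ≥ 5` contribute at most `E/4`, the term
  `n = 4` vanishes, `n = 2` gives `-e^{-x/4}/4`, and `n = 3` is negative. Hence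
  `S < e^{-x} + (E - e^{-x/4})/4`. For `x < 0` the bracket is zero; for `x > 0` it is
  `1 - e^{-x/4} ≤ 1 - e^{-x}`, and the right side is at most `1`.
-/

/-- Comparison with the telescoping series `∑ (1/(n+k) - 1/(n+k+1)) = 1/k`. -/
lemma riesz_tail (f : ℕ → ℝ) (C : ℝ) (k : ℕ) (hk : 1 ≤ k)
    (h : ∀ n : ℕ, |f n| ≤ C / ((n : ℝ) + k + 1) ^ 2) :
    Summable f ∧ |∑' n, f n| ≤ C / k := by
  have hk0 : (0 : ℝ) < k := by exact_mod_cast hk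
  have hC : 0 ≤ C := by
    have h0 := (abs_nonneg _).trans (h 0)
    by_contra! hc
    exact absurd h0 (not_le.mpr (div_neg_of_neg_of_pos hc (by positivity)))
  have hpart : ∀ N : ℕ, ∑ n ∈ Finset.range N, |f n| ≤ C / k - C / ((N : ℝ) + k) := by
    intro N
    induction N with
    | zero => simp
    | succ N ih =>
      rw [Finset.sum_range_succ]
      have hN : (0 : ℝ) < (N : ℝ) + k := by positivity
      have step : C / ((N : ℝ) + k + 1) ^ 2 ≤ C / ((N : ℝ) + k) - C / ((N : ℝ) + k + 1) := by
        have e : C / ((N : ℝ) + k) - C / ((N : ℝ) + k + 1)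
            = C / (((N : ℝ) + k) * ((N : ℝ) + k + 1)) := by
          field_simp
          ring
        rw [e]
        apply div_le_div_of_nonneg_left hC (by positivity)
        nlinarith
      have e2 : ((N + 1 : ℕ) : ℝ) + k = (N : ℝ) + k + 1 := by push_cast; ring
      rw [e2]
      linarith [h N]
  have hpart' : ∀ N : ℕ, ∑ n ∈ Finset.range N, |f n| ≤ C / k := fun N =>
    (hpart N).trans (sub_le_self _ (by positivity))
  have hs : Summable fun n => |f n| :=
    summable_of_sum_range_le (fun n => abs_nonneg _) hpart'
  refine ⟨hs.of_abs, ?_⟩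
  have h1 : |∑' n, f n| ≤ ∑' n, |f n| := norm_tsum_le_tsum_norm (f := f) hs
  exact h1.trans (Real.tsum_le_of_sum_range_le (fun n => abs_nonneg _) hpart')

lemma riesz_term_le (x C : ℝ) (m : ℕ) (h : Real.exp (-x / (m : ℝ) ^ 2) ≤ C) :
    |((moebius m : ℝ) / (m : ℝ) ^ 2) * Real.exp (-x / (m : ℝ) ^ 2)| ≤ C / (m : ℝ) ^ 2 := by
  have hm : |(moebius m : ℝ)| ≤ 1 := by exact_mod_cast abs_moebius_le_one (n := m)
  rw [abs_mul, abs_div, abs_of_pos (Real.exp_pos _), abs_of_nonneg (sq_nonneg (m : ℝ)),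
    div_mul_eq_mul_div]
  apply div_le_div_of_nonneg_right _ (sq_nonneg _)
  nlinarith [Real.exp_pos (-x / (m : ℝ) ^ 2), abs_nonneg (moebius m : ℝ)]

/-- For every nonzero real `x`, `|x ∑_{n≥1} (μ(n)/n²) e^{-x/n²}| < |x| e^{|x|}`. -/
theorem abs_riesz_lt (x : ℝ) (hx : x ≠ 0) :
    |x * ∑' n : ℕ, ((moebius (n + 1) : ℝ) / ((n + 1 : ℕ) : ℝ) ^ 2) *
        Real.exp (-x / ((n + 1 : ℕ) : ℝ) ^ 2)| < |x| * Real.exp |x| := by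
  rw [abs_mul]
  refine mul_lt_mul_of_pos_left ?_ (abs_pos.mpr hx)
  set f : ℕ → ℝ := fun n => ((moebius (n + 1) : ℝ) / ((n + 1 : ℕ) : ℝ) ^ 2) *
        Real.exp (-x / ((n + 1 : ℕ) : ℝ) ^ 2) with hf
  have t1 := riesz_tail (fun n => f (n + 1)) (Real.exp |x|) 1 le_rfl (by
    intro n
    have h := riesz_term_le x (Real.exp |x|) (n + 1 + 1) (by
      apply Real.exp_le_exp.mpr
      rw [div_le_iff₀ (by positivity)]
      have h1 : (1 : ℝ) ≤ ((n + 1 + 1 : ℕ) : ℝ) ^ 2 := by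
        apply one_le_pow₀
        push_cast
        linarith [(Nat.cast_nonneg n : (0 : ℝ) ≤ n)]
      nlinarith [neg_le_abs x, abs_nonneg x])
    simpa [hf] using h)
  have t4 := riesz_tail (fun n => f (n + 4)) (max 1 (Real.exp (-x / 4))) 4 (by norm_num) (by
    intro n
    have h := riesz_term_le x (max 1 (Real.exp (-x / 4))) (n + 4 + 1) (by
      rcases le_total 0 x with h0 | h0
      · apply le_max_of_le_left
        apply Real.exp_le_one_iff.mpr
        exact div_nonpos_of_nonpos_of_nonneg (by linarith) (by positivity)
      · apply le_max_of_le_right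
        apply Real.exp_le_exp.mpr
        apply div_le_div_of_nonneg_left (by linarith) (by norm_num)
        push_cast
        nlinarith [(Nat.cast_nonneg n : (0 : ℝ) ≤ n)])
    simpa [hf] using h)
  have hs : Summable f := (summable_nat_add_iff 1).mp t1.1
  have e1 := hs.sum_add_tsum_nat_add 1
  have e4 := hs.sum_add_tsum_nat_add 4
  have f0 : f 0 = Real.exp (-x) := by simp [hf]
  have f1 : f 1 = -(Real.exp (-x / 4) / 4) := by
    have : moebius 2 = -1 := moebius_apply_prime Nat.prime_two
    simp only [hf, Nat.reduceAdd, this]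
    norm_num
    ring
  have f2 : f 2 < 0 := by
    have : moebius 3 = -1 := moebius_apply_prime Nat.prime_three
    simp only [hf, Nat.reduceAdd, this]
    have := Real.exp_pos (-x / ((3 : ℕ) : ℝ) ^ 2)
    norm_num at this ⊢
    exact this
  have f3 : f 3 = 0 := by
    have : moebius 4 = 0 := by
      apply moebius_eq_zero_of_not_squarefree
      intro h
      have := h 2 (by norm_num)
      norm_num at this
    simp [hf, this]
  simp only [Finset.sum_range_succ, Finset.sum_range_zero, zero_add, f0, f1, f3] at e1 e4
  have b1 := (abs_le.mp t1.2).1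
  have b4 := (abs_le.mp t4.2).2
  norm_num at b1 b4
  rw [abs_lt]
  constructor
  · linarith [Real.exp_pos (-x)]
  · rcases lt_or_gt_of_ne hx with h0 | h0
    · rw [abs_of_neg h0]
      have : max 1 (Real.exp (-x / 4)) = Real.exp (-x / 4) :=
        max_eq_right (Real.one_le_exp (by linarith))
      rw [this] at b4
      linarith
    · rw [abs_of_pos h0]
      have : max 1 (Real.exp (-x / 4)) = 1 :=
        max_eq_left (Real.exp_le_one_iff.mpr (by linarith))
      rw [this] at b4
      have h1 : Real.exp (-x) ≤ Real.exp (-x / 4) := Real.exp_le_exp.mpr (by linarith)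
      have h2 : Real.exp (-x) ≤ 1 := Real.exp_le_one_iff.mpr (by linarith)
      have h3 : 1 ≤ Real.exp x := Real.one_le_exp h0.le
      linarith
end

section
/- For every real β > 0 and all real α and y, ∫_0^∞ e^{-t²/(4β)} cosh(αt) cos(yt) dt = √(πβ) · e^{α²β} · e^{-βy²} · cos(2αβy). -/
/-!
The integrand is even in `t`, so twice the left-hand side is its integral over all of `ℝ`. Write
`cosh (α t)` as the mean of `e^{α t}` and `e^{-α t}`. The integral with `e^{α t}` in place of the
`cosh` is the real part of the complex Gaussian integral
`∫ e^{-t²/(4β) + (α + i y) t} dt = √(4πβ) e^{β (α + i y)²}` (`integral_cexp_quadratic`), and that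
real part, computed in `integral_gaussian_exp_cos`, is even in `α`, so both exponentials contribute
equally.
-/

open MeasureTheory
open scoped Real

/-- The real integrand with `cosh (α t)` replaced by `e^{α t}` is the real part of a complex
Gaussian with linear coefficient `α + i y`. -/
lemma gaussian_exp_cos_eq_re (β α y t : ℝ) :
    Real.exp (-t ^ 2 / (4 * β)) * Real.exp (α * t) * Real.cos (y * t) =
      (Complex.exp (((-1 / (4 * β) : ℝ) : ℂ) * (t : ℂ) ^ 2 +
        (α + y * Complex.I) * t + 0)).re := by
  have h : ((-1 / (4 * β) : ℝ) : ℂ) * (t : ℂ) ^ 2 + (α + y * Complex.I) * t + 0 =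
      ((-t ^ 2 / (4 * β) + α * t : ℝ) : ℂ) + ((y * t : ℝ) : ℂ) * Complex.I := by
    push_cast; ring
  rw [h, Complex.exp_add, ← Complex.ofReal_exp, Complex.re_ofReal_mul,
    Complex.exp_ofReal_mul_I_re, Real.exp_add]

lemma integrable_gaussian_exp_cos (β α y : ℝ) (hβ : 0 < β) :
    Integrable fun t : ℝ =>
      Real.exp (-t ^ 2 / (4 * β)) * Real.exp (α * t) * Real.cos (y * t) := by
  simp_rw [gaussian_exp_cos_eq_re]
  refine (integrable_cexp_quadratic' ?_ _ _).re
  rw [Complex.ofReal_re]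
  exact div_neg_of_neg_of_pos (by norm_num) (by positivity)

lemma integral_gaussian_exp_cos (β α y : ℝ) (hβ : 0 < β) :
    ∫ t : ℝ, Real.exp (-t ^ 2 / (4 * β)) * Real.exp (α * t) * Real.cos (y * t) =
      2 * (Real.sqrt (π * β) * Real.exp (α ^ 2 * β) * Real.exp (-β * y ^ 2) *
        Real.cos (2 * α * β * y)) := by
  have hb : (((-1 / (4 * β) : ℝ) : ℂ)).re < 0 := by
    rw [Complex.ofReal_re]
    exact div_neg_of_neg_of_pos (by norm_num) (by positivity)
  have hβ' : (β : ℂ) ≠ 0 := by exact_mod_cast hβ.ne'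
  simp_rw [gaussian_exp_cos_eq_re]
  have hre := integral_re (integrable_cexp_quadratic' hb (α + y * Complex.I) 0)
  simp only [RCLike.re_eq_complex_re] at hre
  rw [hre, integral_cexp_quadratic hb]
  have h_const : ((π : ℂ) / -((-1 / (4 * β) : ℝ) : ℂ)) ^ (1 / 2 : ℂ) =
      ((2 * Real.sqrt (π * β) : ℝ) : ℂ) := by
    have h1 : (π : ℂ) / -((-1 / (4 * β) : ℝ) : ℂ) = ((2 ^ 2 * (π * β) : ℝ) : ℂ) := by
      push_cast; field_simp; norm_num
    have h2 : (1 / 2 : ℂ) = ((1 / 2 : ℝ) : ℂ) := by push_cast; rfl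
    rw [h1, h2, ← Complex.ofReal_cpow (by positivity), ← Real.sqrt_eq_rpow,
      Real.sqrt_mul (by positivity), Real.sqrt_sq (by norm_num)]
  have h_exp : (0 : ℂ) - (α + y * Complex.I) ^ 2 / (4 * ((-1 / (4 * β) : ℝ) : ℂ)) =
      ((α ^ 2 * β + -β * y ^ 2 : ℝ) : ℂ) + ((2 * α * β * y : ℝ) : ℂ) * Complex.I := by
    push_cast
    field_simp
    linear_combination (β : ℂ) * y ^ 2 * Complex.I_sq
  rw [h_const, h_exp, Complex.re_ofReal_mul, Complex.exp_add, ← Complex.ofReal_exp,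
    Complex.re_ofReal_mul, Complex.exp_ofReal_mul_I_re, Real.exp_add]
  ring

/-- For every real `β > 0` and all real `α`, `y`:
`∫_0^∞ e^{-t²/(4β)} cosh(αt) cos(yt) dt = √(πβ) e^{α²β} e^{-βy²} cos(2αβy)`. -/
theorem integral_gaussian_cosh_cos (β α y : ℝ) (hβ : 0 < β) :
    ∫ t in Set.Ioi (0 : ℝ),
        Real.exp (-t ^ 2 / (4 * β)) * Real.cosh (α * t) * Real.cos (y * t) =
      Real.sqrt (π * β) * Real.exp (α ^ 2 * β) * Real.exp (-β * y ^ 2) *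
        Real.cos (2 * α * β * y) := by
  have h_even := integral_comp_abs
    (f := fun t => Real.exp (-t ^ 2 / (4 * β)) * Real.cosh (α * t) * Real.cos (y * t))
  have h_split : ∀ t : ℝ,
      Real.exp (-|t| ^ 2 / (4 * β)) * Real.cosh (α * |t|) * Real.cos (y * |t|) =
        (Real.exp (-t ^ 2 / (4 * β)) * Real.exp (α * t) * Real.cos (y * t) +
          Real.exp (-t ^ 2 / (4 * β)) * Real.exp (-α * t) * Real.cos (y * t)) / 2 := by
    intro t
    have h1 : Real.cosh (α * |t|) = Real.cosh (α * t) := by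
      rcases abs_choice t with h | h <;> simp [h]
    have h2 : Real.cos (y * |t|) = Real.cos (y * t) := by
      rcases abs_choice t with h | h <;> simp [h]
    rw [h1, h2, sq_abs, Real.cosh_eq, neg_mul]
    ring
  simp only [h_split] at h_even
  -- The value of the exponential integral is unchanged under `α ↦ -α`, so both halves agree.
  rw [integral_div, integral_add (integrable_gaussian_exp_cos β α y hβ)
    (integrable_gaussian_exp_cos β (-α) y hβ), integral_gaussian_exp_cos β α y hβ,
    integral_gaussian_exp_cos β (-α) y hβ] at h_even
  have h_cos : Real.cos (2 * -α * β * y) = Real.cos (2 * α * β * y) := by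
    rw [← Real.cos_neg]; congr 1; ring
  rw [h_cos, neg_sq] at h_even
  linarith
end

section
/- For every real x, ∑_{n≥1} (μ(n)/n²) e^{-x²/n²} = ∑_{m≥0} H_m x^m / (m! ζ(m+2)), where H_m is the m-th Hermite number; equivalently, ∑_{n≥1} (μ(n)/n²) e^{-x²/n²} = ∑_{k≥0} (-1)^k x^{2k} / (k! ζ(2k+2)). In particular, for x ≠ 0 this series equals R(x²)/x², where R is the Riesz function. -/
/-!
Each exponential is expanded in its power series. The double family `μ(n) n⁻² (-x²/n²)^k / k!` is
dominated by `n⁻² · (x²)^k / k!`, hence absolutely summable (`summable_moebius_mul_exp_term`), so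
the order of summation may be exchanged; the inner sum over `n` becomes
`∑ μ(n) n^{-(2k+2)} = 1/ζ(2k+2)` (`tsum_moebius_div_pow`). This gives the expansion in even powers.
The Hermite form is the same series, since `H_m` vanishes for odd `m` and `H_{2k}/(2k)! = (-1)^k/k!`
(`tsum_hermiteNumber_eq`). The relation with the Riesz function is its definition.
-/

open ArithmeticFunction

/-- The `m`-th Hermite number `H_m = H_m(0)`, defined by `e^{-t²} = ∑_{m≥0} H_m t^m/m!`:
`H_{2k} = (-1)^k (2k)!/k!` and `H_{2k+1} = 0`. -/
noncomputable def hermiteNumber (m : ℕ) : ℝ :=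
  if Even m then (-1) ^ (m / 2) * (m.factorial : ℝ) / ((m / 2).factorial : ℝ) else 0

/-- The Riesz function `R(x) = x ∑_{n≥1} (μ(n)/n²) e^{-x/n²}`. -/
noncomputable def rieszFn (x : ℝ) : ℝ :=
  x * ∑' n : ℕ, ((moebius (n + 1) : ℝ) / ((n + 1 : ℕ) : ℝ) ^ 2) *
    Real.exp (-x / ((n + 1 : ℕ) : ℝ) ^ 2)

/-- `∑_{n ≥ 1} μ(n) / n^(2k+2) = 1 / ζ(2k+2)`: the Möbius Dirichlet series at an even integer,
with the summation index shifted to start at `0`. -/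
lemma tsum_moebius_div_pow (k : ℕ) :
    ∑' n : ℕ, ((moebius (n + 1) : ℤ) : ℂ) / ((n + 1 : ℕ) : ℂ) ^ (2 * k + 2) =
      (riemannZeta (2 * (k : ℂ) + 2))⁻¹ := by
  have hs : 1 < (2 * (k : ℂ) + 2).re := by
    have : (0 : ℝ) ≤ k := k.cast_nonneg
    simp
    linarith
  have hinv : LSeries (fun n ↦ ((moebius n : ℤ) : ℂ)) (2 * (k : ℂ) + 2) =
      (riemannZeta (2 * (k : ℂ) + 2))⁻¹ := by
    rw [← LSeries_one_eq_riemannZeta hs]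
    exact eq_inv_of_mul_eq_one_right (LSeries_one_mul_Lseries_moebius hs)
  rw [← hinv, LSeries, Summable.tsum_eq_zero_add (LSeriesSummable_moebius_iff.mpr hs)]
  rw [LSeries.term_zero, zero_add]
  refine tsum_congr fun n ↦ ?_
  rw [LSeries.term_of_ne_zero n.succ_ne_zero, ← Complex.cpow_natCast]
  push_cast
  rfl

/-- The double family `μ(n) / n² · (-x²/n²)^k / k!` is absolutely summable, being dominated by
the product of `∑ 1/n²` and the exponential series of `x²`. -/
lemma summable_moebius_mul_exp_term (x : ℝ) :
    Summable (Function.uncurry fun n k : ℕ ↦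
      ((moebius (n + 1) : ℤ) : ℂ) / ((n + 1 : ℕ) : ℂ) ^ 2 *
        ((-(x : ℂ) ^ 2 / ((n + 1 : ℕ) : ℂ) ^ 2) ^ k / (k.factorial : ℂ))) := by
  have h1 : Summable fun n : ℕ ↦ 1 / ((n + 1 : ℕ) : ℝ) ^ 2 :=
    (summable_nat_add_iff 1).mpr (Real.summable_one_div_nat_pow.mpr one_lt_two)
  have h2 : Summable fun k : ℕ ↦ (x ^ 2) ^ k / (k.factorial : ℝ) :=
    Real.summable_pow_div_factorial (x ^ 2)
  refine Summable.of_norm_bounded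
    (h1.mul_of_nonneg h2 (fun n ↦ by positivity) (fun k ↦ by positivity)) ?_
  rintro ⟨n, k⟩
  have hmu : ‖((moebius (n + 1) : ℤ) : ℂ)‖ ≤ 1 := by
    rw [Complex.norm_intCast]
    exact_mod_cast abs_moebius_le_one
  have hn : (1 : ℝ) ≤ ((n + 1 : ℕ) : ℝ) ^ 2 := one_le_pow₀ (by simp)
  have hx : x ^ 2 / ((n + 1 : ℕ) : ℝ) ^ 2 ≤ x ^ 2 := div_le_self (sq_nonneg x) hn
  simp only [Function.uncurry, norm_mul, norm_div, norm_pow, norm_neg, Complex.norm_natCast,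
    Complex.norm_real, Real.norm_eq_abs, sq_abs]
  gcongr

/-- The expansion in even powers: expand each exponential and interchange the two sums. -/
lemma riesz_even_expansion (x : ℝ) :
    ((∑' n : ℕ, ((moebius (n + 1) : ℝ) / ((n + 1 : ℕ) : ℝ) ^ 2) *
        Real.exp (-x ^ 2 / ((n + 1 : ℕ) : ℝ) ^ 2) : ℝ) : ℂ) =
      ∑' k : ℕ, ((-1) ^ k * (x : ℂ) ^ (2 * k)) /
        ((k.factorial : ℂ) * riemannZeta (2 * (k : ℂ) + 2)) := by
  have hexp (n : ℕ) : (((moebius (n + 1) : ℝ) / ((n + 1 : ℕ) : ℝ) ^ 2 *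
        Real.exp (-x ^ 2 / ((n + 1 : ℕ) : ℝ) ^ 2) : ℝ) : ℂ) =
      ∑' k : ℕ, ((moebius (n + 1) : ℤ) : ℂ) / ((n + 1 : ℕ) : ℂ) ^ 2 *
        ((-(x : ℂ) ^ 2 / ((n + 1 : ℕ) : ℂ) ^ 2) ^ k / (k.factorial : ℂ)) := by
    rw [tsum_mul_left, (NormedSpace.expSeries_div_hasSum_exp
      (-(x : ℂ) ^ 2 / ((n + 1 : ℕ) : ℂ) ^ 2)).tsum_eq, ← Complex.exp_eq_exp_ℂ]
    push_cast
    rfl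
  rw [Complex.ofReal_tsum, tsum_congr hexp, ← (summable_moebius_mul_exp_term x).tsum_comm]
  refine tsum_congr fun k ↦ ?_
  have hterm (n : ℕ) : ((moebius (n + 1) : ℤ) : ℂ) / ((n + 1 : ℕ) : ℂ) ^ 2 *
        ((-(x : ℂ) ^ 2 / ((n + 1 : ℕ) : ℂ) ^ 2) ^ k / (k.factorial : ℂ)) =
      ((-1) ^ k * (x : ℂ) ^ (2 * k) / (k.factorial : ℂ)) *
        (((moebius (n + 1) : ℤ) : ℂ) / ((n + 1 : ℕ) : ℂ) ^ (2 * k + 2)) := by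
    rw [div_pow, neg_pow, ← pow_mul, ← pow_mul, pow_add]
    simp only [div_eq_mul_inv, mul_inv]
    ring
  rw [tsum_congr hterm, tsum_mul_left, tsum_moebius_div_pow]
  simp only [div_eq_mul_inv, mul_inv]
  ring

/-- The Hermite series reduces to its even terms, as `H_m = 0` for odd `m`, and the factorial
`(2k)!` in `H_{2k}` cancels. -/
lemma tsum_hermiteNumber_eq (x : ℝ) :
    ∑' m : ℕ, (hermiteNumber m : ℂ) * (x : ℂ) ^ m /
        ((m.factorial : ℂ) * riemannZeta ((m : ℂ) + 2)) =
      ∑' k : ℕ, ((-1) ^ k * (x : ℂ) ^ (2 * k)) /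
        ((k.factorial : ℂ) * riemannZeta (2 * (k : ℂ) + 2)) := by
  have hinj : Function.Injective fun k : ℕ ↦ 2 * k := fun a b h ↦ by simpa using h
  rw [← hinj.tsum_eq]
  · refine tsum_congr fun k ↦ ?_
    have hf : (((2 * k).factorial : ℕ) : ℂ) ≠ 0 := by exact_mod_cast (2 * k).factorial_ne_zero
    have hH : (hermiteNumber (2 * k) : ℂ) =
        (-1) ^ k * ((2 * k).factorial : ℂ) / (k.factorial : ℂ) := by
      simp [hermiteNumber]
    rw [hH]
    push_cast
    simp only [div_eq_mul_inv, mul_inv]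
    linear_combination ((-1) ^ k * (x : ℂ) ^ (2 * k) * (k.factorial : ℂ)⁻¹ *
      (riemannZeta (2 * (k : ℂ) + 2))⁻¹) * mul_inv_cancel₀ hf
  · intro m hm
    by_contra hodd
    have : ¬ Even m := fun ⟨k, hk⟩ ↦ hodd ⟨k, by simp only; omega⟩
    exact hm (by simp [hermiteNumber, this])

/-- For every real `x`, `∑_{n≥1} (μ(n)/n²) e^{-x²/n²} = ∑_{m≥0} H_m x^m/(m! ζ(m+2))`;
equivalently it equals `∑_{k≥0} (-1)^k x^(2k)/(k! ζ(2k+2))`; and for `x ≠ 0` it equals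
`R(x²)/x²` where `R` is the Riesz function. -/
theorem riesz_hermite_expansion (x : ℝ) :
    ((∑' n : ℕ, ((moebius (n + 1) : ℝ) / ((n + 1 : ℕ) : ℝ) ^ 2) *
        Real.exp (-x ^ 2 / ((n + 1 : ℕ) : ℝ) ^ 2) : ℝ) : ℂ) =
      ∑' m : ℕ, (hermiteNumber m : ℂ) * (x : ℂ) ^ m /
        ((m.factorial : ℂ) * riemannZeta ((m : ℂ) + 2)) ∧
    ((∑' n : ℕ, ((moebius (n + 1) : ℝ) / ((n + 1 : ℕ) : ℝ) ^ 2) *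
        Real.exp (-x ^ 2 / ((n + 1 : ℕ) : ℝ) ^ 2) : ℝ) : ℂ) =
      ∑' k : ℕ, ((-1) ^ k * (x : ℂ) ^ (2 * k)) /
        ((k.factorial : ℂ) * riemannZeta (2 * (k : ℂ) + 2)) ∧
    (x ≠ 0 →
      (∑' n : ℕ, ((moebius (n + 1) : ℝ) / ((n + 1 : ℕ) : ℝ) ^ 2) *
        Real.exp (-x ^ 2 / ((n + 1 : ℕ) : ℝ) ^ 2)) = rieszFn (x ^ 2) / x ^ 2) := by
  refine ⟨?_, riesz_even_expansion x, fun hx ↦ ?_⟩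
  · rw [riesz_even_expansion, tsum_hermiteNumber_eq]
  · rw [rieszFn, mul_div_cancel_left₀ _ (pow_ne_zero 2 hx)]
end

section
/- The function x ↦ ∑_{n≥1} n! x^{-n}/ζ'(-2n) converges for every real x > 0 and satisfies ∑_{n≥1} n! x^{-n}/ζ'(-2n) = O(1/x) as x → ∞. -/
open Filter Asymptotics

/-!
Differentiating the functional equation `ζ(1 - s) = 2 (2π)^(-s) Γ(s) cos(πs/2) ζ(s)` at
`s = 2m + 1`, where the cosine vanishes, gives
`|ζ'(-2m)| = π (2π)^(-(2m+1)) (2m)! |ζ(2m+1)|`. Since `ζ(2m+1) ≥ 1` and `(2m)! ≥ (m!)²`, the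
`m`-th term of the series is at most `2 (4π²/x)^m / m!` in absolute value
(`norm_trivialZeroTerm_le`). The exponential series thus gives convergence for every `x > 0`, and
`x^(-m) ≤ 1/x` for `x ≥ 1`, `m ≥ 1` gives the bound `O(1/x)`.
-/

lemma one_le_norm_riemannZeta_nat {k : ℕ} (hk : 1 < k) : 1 ≤ ‖riemannZeta k‖ := by
  have hs : Summable fun n : ℕ => 1 / (n : ℝ) ^ k := Real.summable_one_div_nat_pow.2 hk
  have h : riemannZeta k = ((∑' n : ℕ, 1 / (n : ℝ) ^ k : ℝ) : ℂ) := by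
    rw [zeta_nat_eq_tsum_of_gt_one hk]
    push_cast
    rfl
  rw [h, Complex.norm_real]
  refine le_trans ?_ (le_abs_self _)
  have := hs.le_tsum 1 (fun j _ => by positivity)
  simpa using this

/-- The functional equation, differentiated at a zero of its cosine factor. -/
lemma norm_deriv_riemannZeta_trivial_zero (m : ℕ) (hm : m ≠ 0) :
    ‖deriv riemannZeta (-2 * (m : ℂ))‖ =
      2 * (2 * Real.pi) ^ (-(2 * (m : ℝ) + 1)) * (2 * m).factorial *
        ‖riemannZeta ((2 * m + 1 : ℕ) : ℂ)‖ * (Real.pi / 2) := by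
  set s₀ : ℂ := ((2 * m + 1 : ℕ) : ℂ) with hs₀
  have hre : 1 < s₀.re := by
    rw [hs₀, Complex.natCast_re]
    exact_mod_cast (by omega : 1 < 2 * m + 1)
  have hpi : (2 * (Real.pi : ℂ)) ≠ 0 := by simp [Real.pi_ne_zero]
  let F : ℂ → ℂ := fun s => 2 * (2 * (Real.pi : ℂ)) ^ (-s) * Complex.Gamma s * riemannZeta s
  let G : ℂ → ℂ := fun s => Complex.cos (Real.pi * s / 2)
  have hFE : (fun s => riemannZeta (1 - s)) =ᶠ[nhds s₀] fun s => F s * G s := by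
    have : ∀ᶠ s : ℂ in nhds s₀, 1 < s.re :=
      (isOpen_lt continuous_const Complex.continuous_re).mem_nhds hre
    filter_upwards [this] with s hs
    rw [riemannZeta_one_sub]
    · simp only [F, G]; ring
    · rintro n rfl
      simp only [Complex.neg_re, Complex.natCast_re] at hs
      linarith [(Nat.cast_nonneg n : (0 : ℝ) ≤ n)]
    · rintro rfl
      simp at hs
  have hF : DifferentiableAt ℂ F s₀ := by
    have h1 : DifferentiableAt ℂ (fun s : ℂ => (2 * (Real.pi : ℂ)) ^ (-s)) s₀ :=
      differentiableAt_id.neg.const_cpow (Or.inl hpi)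
    have h2 : DifferentiableAt ℂ Complex.Gamma s₀ := by
      refine Complex.differentiableAt_Gamma _ fun n h => ?_
      rw [h] at hre
      simp only [Complex.neg_re, Complex.natCast_re] at hre
      linarith [(Nat.cast_nonneg n : (0 : ℝ) ≤ n)]
    have h3 : DifferentiableAt ℂ riemannZeta s₀ := by
      refine differentiableAt_riemannZeta fun h => ?_
      rw [h] at hre
      simp at hre
    exact ((h1.const_mul 2).mul h2).mul h3
  have hG : HasDerivAt G (-Complex.sin (Real.pi * s₀ / 2) * (Real.pi / 2)) s₀ := by
    have h : HasDerivAt (fun s : ℂ => (Real.pi : ℂ) * s / 2) ((Real.pi : ℂ) / 2) s₀ := by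
      simpa using ((hasDerivAt_id s₀).const_mul (Real.pi : ℂ)).div_const 2
    exact h.ccos
  have hG0 : G s₀ = 0 := by
    refine Complex.cos_eq_zero_iff.2 ⟨m, ?_⟩
    rw [hs₀]; push_cast; ring
  have hsin : ‖Complex.sin (Real.pi * s₀ / 2)‖ = 1 := by
    have h := Complex.sin_sq_add_cos_sq (Real.pi * s₀ / 2)
    rw [show Complex.cos (Real.pi * s₀ / 2) = 0 from hG0] at h
    have h' : ‖Complex.sin (Real.pi * s₀ / 2)‖ ^ 2 = 1 := by
      rw [← norm_pow]; simpa using congrArg norm h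
    exact (pow_eq_one_iff_of_nonneg (norm_nonneg _) two_ne_zero).1 h'
  have hder : -deriv riemannZeta (1 - s₀) =
      F s₀ * (-Complex.sin (Real.pi * s₀ / 2) * (Real.pi / 2)) := by
    rw [← deriv_comp_const_sub, hFE.deriv_eq, (hF.hasDerivAt.fun_mul hG).deriv, hG0]
    ring
  have harg : (-2 * (m : ℂ)) = 1 - s₀ := by rw [hs₀]; push_cast; ring
  have hcpow : ‖(2 * (Real.pi : ℂ)) ^ (-s₀)‖ = (2 * Real.pi) ^ (-(2 * (m : ℝ) + 1)) := by
    have h : (2 * (Real.pi : ℂ)) = ((2 * Real.pi : ℝ) : ℂ) := by push_cast; rfl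
    rw [h, Complex.norm_cpow_eq_rpow_re_of_pos (by positivity), hs₀]
    simp only [Complex.neg_re, Complex.natCast_re]
    push_cast; rfl
  have hGam : Complex.Gamma s₀ = ((2 * m).factorial : ℂ) := by
    rw [hs₀, ← Complex.Gamma_nat_eq_factorial]; push_cast; rfl
  rw [harg, ← norm_neg, hder]
  simp only [F]
  rw [hGam]
  simp only [norm_mul, norm_neg, hsin, hcpow, norm_div, Complex.norm_real, Complex.norm_natCast,
    Complex.norm_ofNat, Real.norm_eq_abs, abs_of_pos Real.pi_pos, one_mul]

lemma le_norm_deriv_riemannZeta_trivial_zero (m : ℕ) (hm : m ≠ 0) :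
    ((m.factorial : ℝ) ^ 2) / (2 * (4 * Real.pi ^ 2) ^ m) ≤
      ‖deriv riemannZeta (-2 * (m : ℂ))‖ := by
  have hπ := Real.pi_pos
  rw [norm_deriv_riemannZeta_trivial_zero m hm]
  have hz : 1 ≤ ‖riemannZeta ((2 * m + 1 : ℕ) : ℂ)‖ := one_le_norm_riemannZeta_nat (by omega)
  have hfac : (m.factorial : ℝ) ^ 2 ≤ ((2 * m).factorial : ℝ) := by
    have := Nat.le_of_dvd (Nat.factorial_pos _) (Nat.factorial_mul_factorial_dvd_factorial_add m m)
    rw [← two_mul, ← sq] at this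
    exact_mod_cast this
  have hpow : (2 * Real.pi) ^ (-(2 * (m : ℝ) + 1)) =
      ((4 * Real.pi ^ 2) ^ m * (2 * Real.pi))⁻¹ := by
    rw [Real.rpow_neg (by positivity)]
    congr 1
    rw [show (2 * (m : ℝ) + 1) = ((2 * m + 1 : ℕ) : ℝ) by push_cast; rfl, Real.rpow_natCast,
      pow_succ, pow_mul]
    congr 2; ring
  rw [hpow]
  calc ((m.factorial : ℝ) ^ 2) / (2 * (4 * Real.pi ^ 2) ^ m)
      = 2 * ((4 * Real.pi ^ 2) ^ m * (2 * Real.pi))⁻¹ * (m.factorial : ℝ) ^ 2 * 1 *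
          (Real.pi / 2) := by field_simp
    _ ≤ _ := by gcongr

lemma norm_trivialZeroTerm_le {x : ℝ} (hx : 0 < x) (n : ℕ) :
    ‖(((n + 1).factorial : ℂ) * (x : ℂ) ^ (-((n : ℤ) + 1))) /
        deriv riemannZeta (-2 * ((n : ℂ) + 1))‖ ≤
      2 * ((4 * Real.pi ^ 2 / x) ^ (n + 1) / (n + 1).factorial) := by
  have hπ := Real.pi_pos
  have hd := le_norm_deriv_riemannZeta_trivial_zero (n + 1) n.succ_ne_zero
  have hf : (0 : ℝ) < (n + 1).factorial := by exact_mod_cast Nat.factorial_pos _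
  push_cast at hd
  have hz : ‖(x : ℂ) ^ (-((n : ℤ) + 1))‖ = (x ^ (n + 1))⁻¹ := by
    rw [norm_zpow, Complex.norm_real, Real.norm_of_nonneg hx.le, zpow_neg]
    norm_cast
  rw [norm_div, norm_mul, hz, Complex.norm_natCast]
  calc _ ≤ ((n + 1).factorial * (x ^ (n + 1))⁻¹) /
        (((n + 1).factorial : ℝ) ^ 2 / (2 * (4 * Real.pi ^ 2) ^ (n + 1))) := by gcongr
    _ = _ := by
      rw [div_pow]
      field_simp

lemma summable_exp_tail (y : ℝ) :
    Summable fun n : ℕ => 2 * (y ^ (n + 1) / (n + 1).factorial) :=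
  ((summable_nat_add_iff 1).2 (Real.summable_pow_div_factorial y)).mul_left 2

/-- The series `∑_{n≥1} n! x^{-n}/ζ'(-2n)` converges for every real `x > 0` and is
`O(1/x)` as `x → ∞`. -/
theorem trivial_zero_series_isBigO :
    (∀ x : ℝ, 0 < x → ∃ S : ℂ,
      HasSum (fun n : ℕ =>
        (((n + 1).factorial : ℂ) * (x : ℂ) ^ (-((n : ℤ) + 1))) /
          deriv riemannZeta (-2 * ((n : ℂ) + 1))) S) ∧
    (fun x : ℝ =>
        ∑' n : ℕ, (((n + 1).factorial : ℂ) * (x : ℂ) ^ (-((n : ℤ) + 1))) /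
          deriv riemannZeta (-2 * ((n : ℂ) + 1)))
      =O[atTop] fun x : ℝ => 1 / x := by
  refine ⟨fun x hx => Summable.of_norm_bounded (summable_exp_tail _)
    (norm_trivialZeroTerm_le hx), ?_⟩
  refine IsBigO.of_bound
    (∑' n : ℕ, 2 * ((4 * Real.pi ^ 2) ^ (n + 1) / (n + 1).factorial)) ?_
  filter_upwards [eventually_ge_atTop 1] with x hx
  have hx0 : 0 < x := by linarith
  rw [Real.norm_of_nonneg (by positivity)]
  refine tsum_of_norm_bounded ((summable_exp_tail (4 * Real.pi ^ 2)).hasSum.mul_right (1 / x))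
    fun n => (norm_trivialZeroTerm_le hx0 n).trans ?_
  have hxn : 1 / x ^ (n + 1) ≤ 1 / x :=
    one_div_le_one_div_of_le hx0 (le_self_pow₀ hx n.succ_ne_zero)
  calc 2 * ((4 * Real.pi ^ 2 / x) ^ (n + 1) / (n + 1).factorial)
      = 2 * ((4 * Real.pi ^ 2) ^ (n + 1) / (n + 1).factorial) * (1 / x ^ (n + 1)) := by
        rw [div_pow]; ring
    _ ≤ _ := by gcongr
end

section
/- For every complex s with 1 < Re s < 2, ∫_0^∞ x^{-(s/2+1)} R(x) dx = Γ(1 - s/2)/ζ(s), where R(x) = x ∑_{n≥1} (μ(n)/n²) e^{-x/n²} is the Riesz function; the integral converges absolutely. -/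
/-!
With `w = 1 - s/2`, the integrand is `x^(w-1) ∑ aₙ e^{-pₙ x}` where `aₙ = μ(n)/n²` and
`pₙ = 1/n²`, so the integral is the Mellin transform at `w` of a generalised Dirichlet series of
exponentials. Since `0 < Re w` and `∑ |aₙ| pₙ^{-Re w} ≤ ∑ n^{-Re s} < ∞`, integrating termwise
(`hasSum_mellin`) gives
`∑ Γ(w) aₙ pₙ^{-w} = Γ(1 - s/2) ∑ μ(n) n^{-s} = Γ(1 - s/2) / ζ(s)`.

Absolute convergence then comes for free: this value is nonzero, whereas the Bochner integral of a
non-integrable function is `0`.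
-/

open MeasureTheory ArithmeticFunction

/-- The Dirichlet series `∑ μ(n) n^{-s} = 1/ζ(s)`, reindexed from `n ≥ 1` to match `rieszFn`. -/
lemma LSeries_moebius_hasSum_succ {s : ℂ} (hs : 1 < s.re) :
    HasSum (fun n : ℕ => (moebius (n + 1) : ℂ) / ((n + 1 : ℕ) : ℂ) ^ s) (riemannZeta s)⁻¹ := by
  have h : HasSum (LSeries.term (fun n => (moebius n : ℂ)) s) (riemannZeta s)⁻¹ := by
    have h1 := (LSeriesSummable_moebius_iff.mpr hs).hasSum
    have h2 := LSeries_zeta_mul_Lseries_moebius hs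
    rw [LSeries_zeta_eq_riemannZeta hs] at h2
    rwa [← LSeries, eq_inv_of_mul_eq_one_right h2] at h1
  rw [← hasSum_nat_add_iff' 1] at h
  simpa [LSeries.term_of_ne_zero] using h

lemma abs_moebius_le_one_real (n : ℕ) : |(moebius n : ℝ)| ≤ 1 := by
  exact_mod_cast ArithmeticFunction.abs_moebius_le_one (n := n)

lemma summable_riesz_coeff {r : ℝ} (hr : 1 < r) :
    Summable fun n : ℕ => |(moebius (n + 1) : ℝ)| / ((n + 1 : ℕ) : ℝ) ^ r := by
  refine Summable.of_nonneg_of_le (fun n => by positivity) (fun n => ?_)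
    ((summable_nat_add_iff 1).mpr (Real.summable_one_div_nat_rpow.mpr hr))
  gcongr
  exact abs_moebius_le_one_real _

/-- The series defining `rieszFn` converges absolutely, so its `tsum` is a genuine sum; the terms
are written in the shape `aₙ e^{-pₙ t}` required by `hasSum_mellin`. -/
lemma hasSum_riesz_series {t : ℝ} (ht : 0 < t) :
    HasSum (fun n : ℕ => ((moebius (n + 1) : ℂ) / ((n + 1 : ℕ) : ℂ) ^ 2) *
        (Real.exp (-(1 / ((n + 1 : ℕ) : ℝ) ^ 2) * t) : ℂ))
      ((∑' n : ℕ, ((moebius (n + 1) : ℝ) / ((n + 1 : ℕ) : ℝ) ^ 2) *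
        Real.exp (-t / ((n + 1 : ℕ) : ℝ) ^ 2) : ℝ) : ℂ) := by
  have h : Summable fun n : ℕ => ((moebius (n + 1) : ℝ) / ((n + 1 : ℕ) : ℝ) ^ 2) *
        Real.exp (-t / ((n + 1 : ℕ) : ℝ) ^ 2) := by
    refine Summable.of_norm_bounded (summable_riesz_coeff one_lt_two) (fun n => ?_)
    rw [Real.rpow_two, norm_mul, norm_div, Real.norm_eq_abs, Real.norm_eq_abs, Real.norm_eq_abs,
      Real.abs_exp, abs_of_nonneg (by positivity : (0 : ℝ) ≤ ((n + 1 : ℕ) : ℝ) ^ 2)]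
    refine mul_le_of_le_one_right (by positivity) (Real.exp_le_one_iff.mpr ?_)
    exact div_nonpos_of_nonpos_of_nonneg (by linarith) (by positivity)
  convert Complex.hasSum_ofReal.mpr h.hasSum using 2 with n
  push_cast
  ring_nf

/-- Termwise Mellin transform of `R(x)/x`. The bound `Re s < 2` makes the Gamma integral converge at
`0`, and `1 < Re s` makes the resulting Dirichlet series converge absolutely. -/
lemma mellin_riesz_series {s : ℂ} (hs1 : 1 < s.re) (hs2 : s.re < 2) :
    mellin (fun x : ℝ => ((∑' n : ℕ, ((moebius (n + 1) : ℝ) / ((n + 1 : ℕ) : ℝ) ^ 2) *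
        Real.exp (-x / ((n + 1 : ℕ) : ℝ) ^ 2) : ℝ) : ℂ)) (1 - s / 2) =
      Complex.Gamma (1 - s / 2) / riemannZeta s := by
  have hre : (1 - s / 2).re = 1 - s.re / 2 := by simp
  have key := hasSum_mellin (a := fun n : ℕ => (moebius (n + 1) : ℂ) / ((n + 1 : ℕ) : ℂ) ^ 2)
    (p := fun n : ℕ => 1 / ((n + 1 : ℕ) : ℝ) ^ 2) (s := 1 - s / 2)
    (fun n => Or.inr (by positivity)) (by rw [hre]; linarith)
    (fun t ht => hasSum_riesz_series ht) ?_
  · refine key.unique ?_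
    rw [div_eq_mul_inv (Complex.Gamma (1 - s / 2))]
    convert! (LSeries_moebius_hasSum_succ hs1).mul_left (Complex.Gamma (1 - s / 2)) using 2 with n
    have hn : ((n + 1 : ℕ) : ℂ) ≠ 0 := by exact_mod_cast n.succ_ne_zero
    -- `(1/n²)^w = n^(s-2)`, since `n` is a positive real
    have hp : ((1 / ((n + 1 : ℕ) : ℝ) ^ 2 : ℝ) : ℂ) ^ (1 - s / 2) =
        ((n + 1 : ℕ) : ℂ) ^ s / ((n + 1 : ℕ) : ℂ) ^ 2 := by
      rw [Complex.cpow_def_of_ne_zero (by simpa using by exact_mod_cast hn),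
        ← Complex.ofReal_log (by positivity), one_div, Real.log_inv, Real.log_pow,
        Complex.ofReal_neg, Complex.ofReal_mul, Complex.ofReal_log (by positivity),
        ← Complex.cpow_two, ← Complex.cpow_sub _ _ hn, Complex.cpow_def_of_ne_zero hn]
      push_cast
      ring_nf
    have hns : ((n + 1 : ℕ) : ℂ) ^ s ≠ 0 := fun h => hn ((Complex.cpow_eq_zero_iff _ _).mp h).1
    rw [hp]
    field_simp
  · convert summable_riesz_coeff hs1 using 2 with n
    have hn : (0 : ℝ) < ((n + 1 : ℕ) : ℝ) := by positivity
    have hp : (1 / ((n + 1 : ℕ) : ℝ) ^ 2) ^ (1 - s.re / 2) =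
        ((n + 1 : ℕ) : ℝ) ^ s.re / ((n + 1 : ℕ) : ℝ) ^ 2 := by
      rw [one_div, Real.inv_rpow (by positivity), ← Real.rpow_natCast_mul hn.le,
        ← Real.rpow_neg hn.le, ← Real.rpow_two, ← Real.rpow_sub hn]
      push_cast
      ring_nf
    have hns : ((n + 1 : ℕ) : ℝ) ^ s.re ≠ 0 := (Real.rpow_pos_of_pos hn _).ne'
    rw [hre, hp, norm_div, norm_pow, Complex.norm_natCast, Complex.norm_intCast]
    field_simp

/-- For every complex `s` with `1 < Re s < 2`,
`∫_0^∞ x^(-(s/2+1)) R(x) dx = Γ(1-s/2)/ζ(s)`, the integral converging absolutely. -/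
theorem riesz_mellin (s : ℂ) (hs1 : 1 < s.re) (hs2 : s.re < 2) :
    IntegrableOn (fun x : ℝ => (x : ℂ) ^ (-(s / 2 + 1)) * (rieszFn x : ℂ))
      (Set.Ioi 0) ∧
    (∫ x in Set.Ioi (0 : ℝ), (x : ℂ) ^ (-(s / 2 + 1)) * (rieszFn x : ℂ)) =
      Complex.Gamma (1 - s / 2) / riemannZeta s := by
  have hint : (∫ x in Set.Ioi (0 : ℝ), (x : ℂ) ^ (-(s / 2 + 1)) * (rieszFn x : ℂ)) =
      Complex.Gamma (1 - s / 2) / riemannZeta s := by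
    rw [← mellin_riesz_series hs1 hs2, mellin]
    refine setIntegral_congr_fun measurableSet_Ioi (fun x hx => ?_)
    have hx0 : (x : ℂ) ≠ 0 := Complex.ofReal_ne_zero.mpr (ne_of_gt hx)
    have hpow : (x : ℂ) ^ (1 - s / 2 - 1) = (x : ℂ) ^ (-(s / 2 + 1)) * x := by
      rw [show 1 - s / 2 - 1 = -(s / 2 + 1) + 1 by ring, Complex.cpow_add _ _ hx0,
        Complex.cpow_one]
    simp only [rieszFn, Complex.ofReal_mul x, smul_eq_mul, hpow, mul_assoc]
  refine ⟨?_, hint⟩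
  -- a nonzero Bochner integral certifies integrability
  refine Integrable.of_integral_ne_zero ?_
  rw [hint]
  exact div_ne_zero (Complex.Gamma_ne_zero_of_re_pos (by simp; linarith))
    (riemannZeta_ne_zero_of_one_lt_re hs1)
end

section
/- The Riemann hypothesis holds if and only if for every ε > 0, x ∑_{n≥1} (μ(n)/n²) e^{-x/n²} = O(x^{1/4+ε}) as x → ∞. -/
/-!
Write `f(x) = ∑ μ(n)/n² e^{-x/n²}`, so that the Riesz function is `x f(x)` and the bound to be
characterised says `f(x) = O(x^{-(3/4 - ε)})`. Integrating termwise, the Mellin transform of `f` is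
`Γ(s) / ζ(2 - 2s)` on `0 < Re s < 1 / 2`. To avoid the pole of `ζ`, this is recorded as
`mellin f s * ζ₁(2 - 2s) = (1 - 2s) Γ(s)` with the entire function `ζ₁(s) = (s - 1) ζ(s)`
(`mellin_rieszSum_mul`).

If `f(x) = O(x^{-(3/4 - ε)})`, then `mellin f` is holomorphic on `0 < Re s < 3/4 - ε`, the identity
persists there by analytic continuation, and since `(1 - 2s) Γ(s)` vanishes there only at
`s = 1 / 2`, `ζ` has no zero with `1/2 + 2ε < Re < 1` (`riemannZeta₁_ne_zero_of_isBigO`). The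
functional equation disposes of the zeros to the left of the critical line
(`riemannHypothesis_of_ne_zero`).

Conversely, assume the Riemann hypothesis. Then `Γ(s) / ζ(2 - 2s)` is holomorphic on
`0 < Re s < 3/4`. It decays rapidly on vertical lines: `Γ` does so
(`exists_norm_Gamma_mul_pow_le`), while `1/ζ₁` grows at most polynomially to the right of the
critical line, by the Borel–Carathéodory theorem applied to `log ζ₁`
(`exists_norm_inv_riemannZeta₁_le`). Hence the line of integration in the Mellin inversion formula
for `f` may be moved from `Re s = 1/4` to `Re s = b` for any `b < 3/4`, which gives
`f(x) = O(x^{-b})` (`rieszSum_isBigO_of_RH`).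
-/

open Filter Asymptotics ArithmeticFunction

namespace RieszCriterion

open Complex Set MeasureTheory Topology


/-! ### The Riesz series and its Mellin transform -/

/-- The summand of the Riesz series belonging to the integer `n + 1`. -/
noncomputable def rieszTerm (n : ℕ) (x : ℝ) : ℝ :=
  (moebius (n + 1) : ℝ) / ((n + 1 : ℕ) : ℝ) ^ 2 * Real.exp (-x / ((n + 1 : ℕ) : ℝ) ^ 2)

/-- The series `f(x) = ∑ μ(n)/n² e^{-x/n²}`, without the factor `x` of the Riesz function. -/
noncomputable def rieszSum (x : ℝ) : ℝ := ∑' n : ℕ, rieszTerm n x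

lemma abs_moebius_div_le (n : ℕ) :
    |(moebius (n + 1) : ℝ) / ((n + 1 : ℕ) : ℝ) ^ 2| ≤ 1 / ((n + 1 : ℕ) : ℝ) ^ 2 := by
  rw [abs_div, abs_of_pos (show (0 : ℝ) < ((n + 1 : ℕ) : ℝ) ^ 2 by positivity)]
  gcongr
  exact_mod_cast abs_moebius_le_one

/-- The inequality `e^{-u} ≤ u^{-a}`, valid for `0 ≤ a ≤ 1`, trades the exponential for a power. -/
lemma abs_rieszTerm_le {a : ℝ} (ha0 : 0 ≤ a) (ha1 : a ≤ 1) (n : ℕ) {x : ℝ} (hx : 0 < x) :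
    |rieszTerm n x| ≤ ((n + 1 : ℕ) : ℝ) ^ (2 * a - 2) * x ^ (-a) := by
  have hn : (0 : ℝ) < ((n + 1 : ℕ) : ℝ) := by positivity
  set u : ℝ := x / ((n + 1 : ℕ) : ℝ) ^ 2 with hu
  have hu0 : 0 < u := by positivity
  have h1 : Real.exp (-u) ≤ u ^ (-a) := by
    rw [Real.rpow_neg hu0.le, Real.exp_neg]
    gcongr
    calc u ^ a ≤ (1 + u) ^ a := by gcongr; linarith
      _ ≤ (1 + u) ^ (1 : ℝ) := Real.rpow_le_rpow_of_exponent_le (by linarith) ha1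
      _ = u + 1 := by rw [Real.rpow_one]; ring
      _ ≤ Real.exp u := Real.add_one_le_exp u
  have h2 : u ^ (-a) = x ^ (-a) * ((n + 1 : ℕ) : ℝ) ^ (2 * a) := by
    rw [hu, Real.div_rpow hx.le (by positivity), ← Real.rpow_natCast, ← Real.rpow_mul hn.le,
      div_eq_mul_inv, ← Real.rpow_neg hn.le]
    congr 2; push_cast; ring
  rw [rieszTerm, abs_mul, abs_of_pos (Real.exp_pos _), neg_div, ← hu]
  calc _ ≤ 1 / ((n + 1 : ℕ) : ℝ) ^ 2 * u ^ (-a) := by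
        gcongr
        exact abs_moebius_div_le n
    _ = _ := by
        rw [h2, Real.rpow_sub hn, Real.rpow_ofNat]
        ring

lemma summable_add_one_rpow {a : ℝ} (ha : a < 1 / 2) :
    Summable fun n : ℕ ↦ ((n + 1 : ℕ) : ℝ) ^ (2 * a - 2) :=
  (summable_nat_add_iff 1).mpr (Real.summable_nat_rpow.mpr (by linarith))

lemma summable_one_div_sq : Summable fun n : ℕ ↦ 1 / ((n + 1 : ℕ) : ℝ) ^ 2 :=
  (summable_nat_add_iff 1 (f := fun n : ℕ ↦ 1 / (n : ℝ) ^ 2)).mpr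
    (Real.summable_one_div_nat_pow.mpr one_lt_two)

lemma abs_rieszTerm_le' (n : ℕ) {x : ℝ} (hx : 0 ≤ x) :
    |rieszTerm n x| ≤ 1 / ((n + 1 : ℕ) : ℝ) ^ 2 := by
  rw [rieszTerm, abs_mul, abs_of_pos (Real.exp_pos _)]
  calc _ ≤ 1 / ((n + 1 : ℕ) : ℝ) ^ 2 * 1 := by
        gcongr
        · exact abs_moebius_div_le n
        · rw [Real.exp_le_one_iff, neg_div, Left.neg_nonpos_iff]
          positivity
    _ = _ := mul_one _

lemma summable_rieszTerm {x : ℝ} (hx : 0 ≤ x) : Summable fun n ↦ rieszTerm n x :=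
  .of_norm_bounded summable_one_div_sq fun n ↦ abs_rieszTerm_le' n hx

lemma continuousOn_rieszSum : ContinuousOn rieszSum (Ici 0) := by
  refine continuousOn_tsum (fun n ↦ ?_) summable_one_div_sq fun n x hx ↦ abs_rieszTerm_le' n hx
  unfold rieszTerm
  fun_prop

lemma continuousOn_ofReal_rieszSum : ContinuousOn (fun x ↦ (rieszSum x : ℂ)) (Ioi 0) :=
  continuous_ofReal.comp_continuousOn (continuousOn_rieszSum.mono Ioi_subset_Ici_self)

lemma locallyIntegrableOn_rieszSum :
    LocallyIntegrableOn (fun x ↦ (rieszSum x : ℂ)) (Ioi 0) :=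
  continuousOn_ofReal_rieszSum.locallyIntegrableOn measurableSet_Ioi

lemma rieszSum_isBigO_zero :
    (fun x ↦ (rieszSum x : ℂ)) =O[𝓝[>] 0] fun x : ℝ ↦ x ^ (-0 : ℝ) := by
  refine IsBigO.of_bound (∑' n : ℕ, 1 / ((n + 1 : ℕ) : ℝ) ^ 2) ?_
  filter_upwards [self_mem_nhdsWithin] with x hx
  simp only [neg_zero, Real.rpow_zero, norm_one, mul_one, norm_real]
  exact tsum_of_norm_bounded summable_one_div_sq.hasSum fun n ↦ abs_rieszTerm_le' n (le_of_lt hx)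

/-- The unconditional decay rate, every exponent `a < 1 / 2` being admissible. -/
lemma rieszSum_isBigO_top {a : ℝ} (ha0 : 0 ≤ a) (ha : a < 1 / 2) :
    (fun x ↦ (rieszSum x : ℂ)) =O[atTop] fun x : ℝ ↦ x ^ (-a) := by
  refine IsBigO.of_bound (∑' n : ℕ, ((n + 1 : ℕ) : ℝ) ^ (2 * a - 2)) ?_
  filter_upwards [eventually_gt_atTop 0] with x hx
  rw [norm_real, Real.norm_of_nonneg (Real.rpow_nonneg hx.le _), ← tsum_mul_right]
  exact tsum_of_norm_bounded ((summable_add_one_rpow ha).mul_right _).hasSum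
    fun n ↦ abs_rieszTerm_le ha0 (by linarith) n hx

lemma mellinConvergent_rieszSum {s : ℂ} (h0 : 0 < s.re) (h1 : s.re < 1 / 2) :
    MellinConvergent (fun x ↦ (rieszSum x : ℂ)) s := by
  obtain ⟨a, ha, ha'⟩ := exists_between h1
  exact mellinConvergent_of_isBigO_rpow locallyIntegrableOn_rieszSum
    (rieszSum_isBigO_top (h0.trans ha).le ha') ha rieszSum_isBigO_zero h0

lemma riemannZeta₁_eq (s : ℂ) (hs : s ≠ 1) : riemannZeta₁ s = (s - 1) * riemannZeta s := by
  rw [riemannZeta_eq_inv_sub_mul hs, mul_inv_cancel_left₀ (sub_ne_zero.mpr hs)]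

/-- Termwise integration: the Mellin transform of `rieszSum` is `Γ(s) / ζ(2 - 2s)`. -/
lemma mellin_rieszSum {s : ℂ} (h0 : 0 < s.re) (h1 : s.re < 1 / 2) :
    mellin (fun x ↦ (rieszSum x : ℂ)) s * riemannZeta (2 - 2 * s) = Gamma s := by
  have hre : 1 < (2 - 2 * s).re := by simp; linarith
  have key := hasSum_mellin (ι := ℕ)
    (a := fun n ↦ (((moebius (n + 1) : ℝ) / ((n + 1 : ℕ) : ℝ) ^ 2 : ℝ) : ℂ))
    (p := fun n ↦ 1 / ((n + 1 : ℕ) : ℝ) ^ 2) (F := fun x ↦ (rieszSum x : ℂ)) (s := s)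
    (fun n ↦ Or.inr (by positivity)) h0 (fun x hx ↦ ?_) ?_
  · have hL : LSeries (fun n ↦ ((moebius n : ℤ) : ℂ)) (2 - 2 * s) =
        ∑' n : ℕ, ((moebius (n + 1) : ℤ) : ℂ) / ((n + 1 : ℕ) : ℂ) ^ (2 - 2 * s) := by
      have hs := LSeriesSummable_moebius_iff.mpr hre
      rw [LSeries, hs.tsum_eq_zero_add]
      simp [LSeries.term_def]
    have hM := LSeries_one_mul_Lseries_moebius hre
    rw [LSeries_one_eq_riemannZeta hre, hL] at hM
    rw [← key.tsum_eq]
    have : ∀ n : ℕ, Gamma s * (((moebius (n + 1) : ℝ) / ((n + 1 : ℕ) : ℝ) ^ 2 : ℝ) : ℂ) /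
        ((1 / ((n + 1 : ℕ) : ℝ) ^ 2 : ℝ) : ℂ) ^ s =
        Gamma s * (((moebius (n + 1) : ℤ) : ℂ) / ((n + 1 : ℕ) : ℂ) ^ (2 - 2 * s)) := by
      intro n
      have hn : ((n + 1 : ℕ) : ℂ) ≠ 0 := by exact_mod_cast n.succ_ne_zero
      have e1 : ((1 / ((n + 1 : ℕ) : ℝ) ^ 2 : ℝ) : ℂ) ^ s = (((n + 1 : ℕ) : ℂ) ^ (2 * s))⁻¹ := by
        have hn' : (0 : ℝ) < ((n + 1 : ℕ) : ℝ) := by positivity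
        have h2 : (1 / ((n + 1 : ℕ) : ℝ) ^ 2 : ℝ) ≠ 0 := by positivity
        rw [← cpow_neg, cpow_def_of_ne_zero (ofReal_ne_zero.mpr h2), cpow_def_of_ne_zero hn,
          ← ofReal_log (by positivity), ← natCast_log, one_div, Real.log_inv, Real.log_pow]
        congr 1
        push_cast
        ring
      rw [e1, cpow_sub _ _ hn, cpow_ofNat]
      push_cast
      field_simp
    rw [tsum_congr this, tsum_mul_left, mul_assoc, mul_comm (tsum _), hM, mul_one]
  · have : HasSum (fun n ↦ (rieszTerm n x : ℂ)) (rieszSum x) :=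
      Complex.hasSum_ofReal.mpr (summable_rieszTerm (le_of_lt (mem_Ioi.mp hx))).hasSum
    convert this using 1
    ext n
    rw [rieszTerm, ofReal_mul]
    congr 3
    ring
  · refine (summable_add_one_rpow h1).of_nonneg_of_le (fun n ↦ by positivity) fun n ↦ ?_
    have hn : (0 : ℝ) < ((n + 1 : ℕ) : ℝ) := by positivity
    rw [norm_real, Real.norm_eq_abs, Real.rpow_sub hn, Real.rpow_mul hn.le, one_div,
      Real.inv_rpow (by positivity), div_inv_eq_mul, Real.rpow_ofNat]
    calc _ ≤ 1 / ((n + 1 : ℕ) : ℝ) ^ 2 * (((n + 1 : ℕ) : ℝ) ^ 2) ^ s.re := by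
          gcongr; exact abs_moebius_div_le n
      _ = _ := by ring

/-- The form of `mellin_rieszSum` free of the pole of `ζ` at `1`, that is, at `s = 1 / 2`. -/
lemma mellin_rieszSum_mul {s : ℂ} (h0 : 0 < s.re) (h1 : s.re < 1 / 2) :
    mellin (fun x ↦ (rieszSum x : ℂ)) s * riemannZeta₁ (2 - 2 * s) = (1 - 2 * s) * Gamma s := by
  have hne : 2 - 2 * s ≠ 1 := fun h ↦ by
    have := congrArg re h
    simp at this; linarith
  rw [riemannZeta₁_eq _ hne, ← mellin_rieszSum h0 h1]
  ring

/-! ### Polynomial growth of the zeta function for `Re s ≥ 1 / 2` -/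
/-- The fractional part on `(1, ∞)`, extended by zero. -/
noncomputable def fractTail : ℝ → ℂ := (Ioi 1).indicator fun t ↦ ((Int.fract t : ℝ) : ℂ)

lemma measurable_fractTail : Measurable fractTail :=
  (continuous_ofReal.measurable.comp measurable_fract).indicator measurableSet_Ioi

lemma norm_fractTail_le (t : ℝ) : ‖fractTail t‖ ≤ 1 := by
  unfold fractTail
  by_cases ht : t ∈ Ioi (1 : ℝ)
  · rw [indicator_of_mem ht, norm_real, Real.norm_of_nonneg (Int.fract_nonneg t)]
    exact (Int.fract_lt_one t).le
  · simp [indicator_of_notMem ht]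

lemma locallyIntegrableOn_fractTail : LocallyIntegrableOn fractTail (Ioi 0) := by
  refine LocallyIntegrable.locallyIntegrableOn ?_ _
  exact (locallyIntegrable_const (1 : ℝ)).mono measurable_fractTail.aestronglyMeasurable
    (.of_forall fun t ↦ by simpa using norm_fractTail_le t)

lemma fractTail_isBigO_top : fractTail =O[atTop] fun t : ℝ ↦ t ^ (-0 : ℝ) :=
  .of_bound 1 (.of_forall fun t ↦ by simpa using norm_fractTail_le t)

/-- `fractTail` vanishes near `0`, so it is bounded there by every power. -/
lemma fractTail_isBigO_zero (b : ℝ) : fractTail =O[𝓝[>] 0] fun t : ℝ ↦ t ^ (-b) := by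
  refine .of_bound 1 ?_
  filter_upwards [Ioo_mem_nhdsGT (zero_lt_one (α := ℝ))] with t ht
  rw [fractTail, indicator_of_notMem (by simpa using ht.2.le)]
  simp only [norm_zero]
  positivity

lemma differentiableAt_mellin_fractTail {s : ℂ} (hs : s.re < 0) :
    DifferentiableAt ℂ (mellin fractTail) s :=
  mellin_differentiableAt_of_isBigO_rpow locallyIntegrableOn_fractTail fractTail_isBigO_top hs
    (fractTail_isBigO_zero (s.re - 1)) (by linarith)

lemma mellinConvergent_fractTail {s : ℂ} (hs : s.re < 0) : MellinConvergent fractTail s :=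
  mellinConvergent_of_isBigO_rpow locallyIntegrableOn_fractTail fractTail_isBigO_top hs
    (fractTail_isBigO_zero (s.re - 1)) (by linarith)

lemma mellin_fractTail (s : ℂ) :
    mellin fractTail s = ∫ t : ℝ in Ioi 1, (t : ℂ) ^ (s - 1) * ((Int.fract t : ℝ) : ℂ) := by
  have : ∀ t : ℝ, (t : ℂ) ^ (s - 1) • fractTail t =
      (Ioi 1).indicator (fun t : ℝ ↦ (t : ℂ) ^ (s - 1) * ((Int.fract t : ℝ) : ℂ)) t := by
    intro t
    by_cases ht : t ∈ Ioi (1 : ℝ)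
    · simp [fractTail, indicator_of_mem ht]
    · simp [fractTail, indicator_of_notMem ht]
  rw [mellin]
  simp_rw [this]
  rw [setIntegral_indicator measurableSet_Ioi, inter_eq_right.mpr (Ioi_subset_Ioi zero_le_one)]

lemma norm_mellin_fractTail_le {s : ℂ} (hs : s.re < 0) :
    ‖mellin fractTail s‖ ≤ 1 / (-s.re) := by
  have h1 : s.re - 1 < -1 := by linarith
  have h2 : ∫ t : ℝ in Ioi 1, t ^ (s.re - 1) = 1 / (-s.re) := by
    rw [integral_Ioi_rpow_of_lt h1 one_pos, Real.one_rpow, sub_add_cancel]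
    field_simp
  rw [mellin_fractTail, ← h2]
  refine norm_integral_le_of_norm_le (integrableOn_Ioi_rpow_of_lt h1 one_pos) ?_
  refine (ae_restrict_iff' measurableSet_Ioi).mpr (.of_forall fun t ht ↦ ?_)
  have ht0 : 0 < t := one_pos.trans ht
  rw [norm_mul, norm_cpow_eq_rpow_re_of_pos ht0, norm_real,
    Real.norm_of_nonneg (Int.fract_nonneg t), sub_re, one_re]
  exact mul_le_of_le_one_right (by positivity) (Int.fract_lt_one t).le

lemma riemannZeta₁_eq_of_one_lt_re {s : ℂ} (hs : 1 < s.re) :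
    riemannZeta₁ s = s - s * (s - 1) * mellin fractTail (-s) := by
  have hs1 : s - 1 ≠ 0 := fun h ↦ by
    have := congrArg re h
    simp at this; linarith
  have hL : riemannZeta s = s * ∫ t in Ioi (1 : ℝ), (∑ k ∈ Finset.Icc 1 ⌊t⌋₊, (1 : ℕ → ℂ) k) *
      (t : ℂ) ^ (-(s + 1)) := by
    rw [← LSeries_one_eq_riemannZeta hs]
    refine LSeries_eq_mul_integral' 1 zero_le_one hs ?_
    refine .of_bound 1 (.of_forall fun n ↦ ?_)
    simp
  have hI : ∫ t in Ioi (1 : ℝ), (∑ k ∈ Finset.Icc 1 ⌊t⌋₊, (1 : ℕ → ℂ) k) *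
      (t : ℂ) ^ (-(s + 1)) = 1 / (s - 1) - mellin fractTail (-s) := by
    have e1 : ∫ t in Ioi (1 : ℝ), (t : ℂ) ^ (-s) = 1 / (s - 1) := by
      rw [integral_Ioi_cpow_of_lt (by simpa using hs) one_pos, ofReal_one, one_cpow,
        ← neg_div_neg_eq, neg_neg]
      congr 1; ring
    have i1 : IntegrableOn (fun t : ℝ ↦ (t : ℂ) ^ (-s)) (Ioi 1) :=
      integrableOn_Ioi_cpow_of_lt (by simpa using hs) one_pos
    have i2 : IntegrableOn (fun t : ℝ ↦ (t : ℂ) ^ (-s - 1) * ((Int.fract t : ℝ) : ℂ)) (Ioi 1) := by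
      have := (mellinConvergent_fractTail (s := -s) (by simp; linarith)).mono_set
        (Ioi_subset_Ioi zero_le_one)
      refine this.congr_fun (fun t ht ↦ ?_) measurableSet_Ioi
      simp [fractTail, indicator_of_mem ht]
    rw [mellin_fractTail, ← e1, ← integral_sub i1 i2]
    refine setIntegral_congr_fun measurableSet_Ioi fun t ht ↦ ?_
    have ht0 : (0 : ℝ) < t := one_pos.trans ht
    have ht0' : (t : ℂ) ≠ 0 := ofReal_ne_zero.mpr ht0.ne'
    have e2 : (t : ℂ) ^ (-s) = (t : ℂ) ^ (-s - 1) * t := by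
      rw [cpow_sub _ _ ht0', cpow_one, div_mul_cancel₀ _ ht0']
    have e3 : (⌊t⌋₊ : ℂ) = t - ((Int.fract t : ℝ) : ℂ) := by
      rw [← ofReal_natCast, natCast_floor_eq_intCast_floor ht0.le, ← Int.self_sub_fract]
      push_cast; rfl
    simp only [Pi.one_apply, Finset.sum_const, Nat.card_Icc, add_tsub_cancel_right, nsmul_eq_mul,
      mul_one]
    rw [e2, e3, show -(s + 1) = -s - 1 by ring]
    ring
  rw [riemannZeta₁_eq s (sub_ne_zero.mp hs1), hL, hI]
  field_simp

lemma isPreconnected_re_strip (a b : ℝ) : IsPreconnected {s : ℂ | a < s.re ∧ s.re < b} :=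
  ((convex_halfSpace_re_gt a).inter (convex_halfSpace_re_lt b)).isPreconnected

/-- The representation `ζ(s) = s / (s - 1) - s ∫_1^∞ {t} t^{-s-1} dt`, continued to `Re s > 0`. -/
lemma riemannZeta₁_eq_of_re_pos {s : ℂ} (hs : 0 < s.re) :
    riemannZeta₁ s = s - s * (s - 1) * mellin fractTail (-s) := by
  have hU : IsOpen {s : ℂ | 0 < s.re} := isOpen_lt continuous_const continuous_re
  have hf : AnalyticOnNhd ℂ riemannZeta₁ {s : ℂ | 0 < s.re} :=
    differentiable_riemannZeta₁.differentiableOn.analyticOnNhd hU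
  have hg : AnalyticOnNhd ℂ (fun s ↦ s - s * (s - 1) * mellin fractTail (-s)) {s : ℂ | 0 < s.re} := by
    refine DifferentiableOn.analyticOnNhd (fun z hz ↦ DifferentiableAt.differentiableWithinAt ?_) hU
    have : DifferentiableAt ℂ (fun s ↦ mellin fractTail (-s)) z :=
      (differentiableAt_mellin_fractTail (s := -z) (by simpa using hz)).fun_comp' z
        differentiableAt_id.neg
    fun_prop
  refine hf.eqOn_of_preconnected_of_eventuallyEq hg (convex_halfSpace_re_gt 0).isPreconnected
    (z₀ := 2) (by simp) ?_ hs
  filter_upwards [(isOpen_lt continuous_const continuous_re).mem_nhds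
    (show (2 : ℂ) ∈ {s : ℂ | 1 < s.re} by simp)] with z hz
  exact riemannZeta₁_eq_of_one_lt_re hz

lemma norm_riemannZeta₁_le {s : ℂ} (hs : 1 / 2 ≤ s.re) :
    ‖riemannZeta₁ s‖ ≤ 3 * (1 + ‖s‖) ^ 2 := by
  have h := norm_mellin_fractTail_le (s := -s) (by simp; linarith)
  rw [neg_re, neg_neg] at h
  have h2 : 1 / s.re ≤ 2 := by
    rw [div_le_iff₀ (by linarith)]; linarith
  have h3 : ‖s - 1‖ ≤ 1 + ‖s‖ := (norm_sub_le _ _).trans (by simp [add_comm])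
  have h0 := norm_nonneg s
  rw [riemannZeta₁_eq_of_re_pos (by linarith)]
  calc _ ≤ ‖s‖ + ‖s‖ * ‖s - 1‖ * ‖mellin fractTail (-s)‖ := by
        refine (norm_sub_le _ _).trans ?_
        rw [norm_mul, norm_mul]
    _ ≤ (1 + ‖s‖) + (1 + ‖s‖) * (1 + ‖s‖) * 2 := by
        gcongr
        · linarith
        · linarith
        · exact h.trans h2
    _ ≤ _ := by nlinarith

/-! ### Vertical bounds for the Gamma function and for `1 / ζ` -/

lemma norm_Gamma_le {s : ℂ} (hs : 0 < s.re) : ‖Gamma s‖ ≤ Real.Gamma s.re := by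
  rw [Gamma_eq_integral hs, Real.Gamma_eq_integral hs, GammaIntegral]
  refine norm_integral_le_of_norm_le (Real.GammaIntegral_convergent hs) ?_
  refine (ae_restrict_iff' measurableSet_Ioi).mpr (.of_forall fun t ht ↦ ?_)
  rw [norm_mul, norm_cpow_eq_rpow_re_of_pos ht, norm_real, Real.norm_of_nonneg (Real.exp_nonneg _),
    sub_re, one_re]

/-- In a vertical strip of the right half-plane `Γ` decays faster than any power of the imaginary
part: each use of `Γ(s) = Γ(s + 1) / s` gains one power. -/
lemma exists_norm_Gamma_mul_pow_le (n : ℕ) {a b : ℝ} (ha : 0 < a) :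
    ∃ C, 0 ≤ C ∧ ∀ s : ℂ, a ≤ s.re → s.re ≤ b → ‖Gamma s‖ * (1 + |s.im|) ^ n ≤ C := by
  induction n generalizing a b with
  | zero =>
    have hc : ContinuousOn Real.Gamma (Icc a b) := fun x hx ↦
      (Real.differentiableAt_Gamma fun m ↦ by
        have : 0 < x := ha.trans_le hx.1
        have : (0 : ℝ) ≤ m := m.cast_nonneg
        linarith).continuousAt.continuousWithinAt
    obtain ⟨C, hC⟩ := isCompact_Icc.exists_bound_of_continuousOn hc
    refine ⟨|C|, abs_nonneg _, fun s h1 h2 ↦ ?_⟩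
    rw [pow_zero, mul_one]
    exact (norm_Gamma_le (ha.trans_le h1)).trans
      ((le_abs_self _).trans ((hC _ ⟨h1, h2⟩).trans (le_abs_self _)))
  | succ n ih =>
    obtain ⟨C, hC0, hC⟩ := ih (a := a + 1) (b := b + 1) (by linarith)
    refine ⟨C * (1 / a + 1), by positivity, fun s h1 h2 ↦ ?_⟩
    have hs : 0 < ‖s‖ := norm_pos_iff.mpr fun h ↦ by simp [h] at h1; linarith
    have h3 := hC (s + 1) (by simpa using h1) (by simpa using h2)
    rw [Gamma_add_one s (norm_pos_iff.mp hs), norm_mul, add_im, one_im, add_zero] at h3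
    have h4 : 1 + |s.im| ≤ (1 / a + 1) * ‖s‖ := by
      have e1 : a ≤ ‖s‖ := h1.trans (re_le_norm s)
      have e2 := abs_im_le_norm s
      have e3 : 1 ≤ 1 / a * ‖s‖ := by
        rw [one_div_mul_eq_div, le_div_iff₀ ha]; linarith
      linarith
    calc ‖Gamma s‖ * (1 + |s.im|) ^ (n + 1)
        = ‖Gamma s‖ * (1 + |s.im|) ^ n * (1 + |s.im|) := by ring
      _ ≤ ‖Gamma s‖ * (1 + |s.im|) ^ n * ((1 / a + 1) * ‖s‖) := by gcongr
      _ = ‖s‖ * ‖Gamma s‖ * (1 + |s.im|) ^ n * (1 / a + 1) := by ring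
      _ ≤ _ := by gcongr

/-- On `Re z = 2` the series `∑ μ(n) n^{-z}` is bounded, and it is the inverse of `ζ`. -/
lemma exists_le_norm_riemannZeta₁_two_add :
    ∃ c : ℝ, 0 < c ∧ ∀ z : ℂ, z.re = 2 → c ≤ ‖riemannZeta₁ z‖ := by
  have hsum : Summable fun n : ℕ ↦ 1 / (n : ℝ) ^ 2 := Real.summable_one_div_nat_pow.mpr one_lt_two
  set K : ℝ := ∑' n : ℕ, 1 / (n : ℝ) ^ 2 with hK
  have hbound : ∀ z : ℂ, z.re = 2 → ‖LSeries (fun n ↦ ((moebius n : ℤ) : ℂ)) z‖ ≤ K := by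
    intro z hz
    refine tsum_of_norm_bounded hsum.hasSum fun n ↦ ?_
    rcases eq_or_ne n 0 with rfl | hn
    · simp
    · rw [LSeries.term_of_ne_zero hn, norm_div, norm_natCast_cpow_of_pos (by positivity), hz,
        Real.rpow_ofNat]
      gcongr
      rw [norm_intCast]
      exact_mod_cast abs_moebius_le_one
  have hKpos : 0 < K := by
    refine hsum.tsum_pos (fun n ↦ by positivity) 1 (by simp)
  refine ⟨1 / K, by positivity, fun z hz ↦ ?_⟩
  have hz1 : z ≠ 1 := fun h ↦ by simp [h] at hz
  have hre : 1 < z.re := by linarith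
  have hM := congrArg norm (LSeries_one_mul_Lseries_moebius hre)
  rw [LSeries_one_eq_riemannZeta hre, norm_mul, norm_one] at hM
  have h1 : 1 ≤ ‖z - 1‖ := by
    calc (1 : ℝ) = (z - 1).re := by simp [hz]; norm_num
      _ ≤ _ := re_le_norm _
  rw [riemannZeta₁_eq z hz1, norm_mul, div_le_iff₀ hKpos]
  calc 1 = ‖riemannZeta z‖ * ‖LSeries (fun n ↦ ((moebius n : ℤ) : ℂ)) z‖ := hM.symm
    _ ≤ ‖riemannZeta z‖ * K := by gcongr; exact hbound z hz
    _ ≤ ‖z - 1‖ * ‖riemannZeta z‖ * K := by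
      gcongr
      exact le_mul_of_one_le_left (norm_nonneg _) h1

/-- A nonvanishing holomorphic function on a disk has a holomorphic logarithm; `h` is the logarithm
of `g / g 0` vanishing at the centre. -/
lemma exists_log_on_ball {g : ℂ → ℂ} {R : ℝ} (hR : 0 < R)
    (hg : DifferentiableOn ℂ g (Metric.ball 0 R)) (h0 : ∀ w ∈ Metric.ball (0 : ℂ) R, g w ≠ 0) :
    ∃ h : ℂ → ℂ, DifferentiableOn ℂ h (Metric.ball 0 R) ∧ h 0 = 0 ∧
      ∀ w ∈ Metric.ball (0 : ℂ) R, g w = g 0 * exp (h w) := by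
  have hd : DifferentiableOn ℂ (fun w ↦ deriv g w / g w) (Metric.ball 0 R) :=
    (hg.deriv Metric.isOpen_ball).div hg h0
  obtain ⟨h, hh0, hh⟩ := hd.isExactOn_ball.with_val_at 0 0
  refine ⟨h, fun w hw ↦ (hh w hw).differentiableAt.differentiableWithinAt, hh0, fun w hw ↦ ?_⟩
  have hzero : (0 : ℂ) ∈ Metric.ball (0 : ℂ) R := Metric.mem_ball_self hR
  -- As `h` is a primitive of the logarithmic derivative of `g`, the function `g * exp (-h)`
  -- is constant.
  have hderiv : ∀ z ∈ Metric.ball (0 : ℂ) R, HasDerivAt (fun z ↦ g z * exp (-h z)) 0 z := by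
    intro z hz
    have h1 := (hg.differentiableAt (Metric.isOpen_ball.mem_nhds hz)).hasDerivAt
    refine (h1.fun_mul (hh z hz).fun_neg.cexp).congr_deriv ?_
    have e : g z * (deriv g z / g z) = deriv g z := mul_div_cancel₀ _ (h0 z hz)
    linear_combination -exp (-h z) * e
  have hconst : g w * exp (-h w) = g 0 * exp (-h 0) :=
    Metric.isOpen_ball.is_const_of_deriv_eq_zero (convex_ball _ _).isPreconnected
      (fun z hz ↦ (hderiv z hz).differentiableAt.differentiableWithinAt)
      (fun z hz ↦ (hderiv z hz).deriv) hw hzero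
  rw [hh0, neg_zero, exp_zero, mul_one] at hconst
  rw [← hconst, mul_assoc, ← exp_add, neg_add_cancel, exp_zero, mul_one]

lemma riemannZeta₁_ne_zero (hRH : RiemannHypothesis) {z : ℂ} (hz : 1 / 2 < z.re) :
    riemannZeta₁ z ≠ 0 := by
  rcases eq_or_ne z 1 with rfl | h1
  · simp
  · rw [riemannZeta₁_eq z h1]
    refine mul_ne_zero (sub_ne_zero.mpr h1) fun h ↦ hz.ne' (hRH z h ?_ h1)
    rintro ⟨n, rfl⟩
    have : (0 : ℝ) ≤ n := n.cast_nonneg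
    simp at hz
    linarith

/-- Under RH, `1 / ζ₁` grows at most polynomially on vertical lines to the right of `1 / 2`: apply the
Borel–Carathéodory theorem to `log ζ₁` on the disk of radius `3 / 2` about `2 + i Im z`, where
`Re log ζ₁ = log |ζ₁|` is bounded above by a multiple of `log (2 + |Im z|)`. -/
lemma exists_norm_inv_riemannZeta₁_le (hRH : RiemannHypothesis) {a : ℝ} (ha : 1 / 2 < a) :
    ∃ (C : ℝ) (N : ℕ), 0 ≤ C ∧ ∀ z : ℂ, a ≤ z.re → z.re ≤ 2 →
      ‖(riemannZeta₁ z)⁻¹‖ ≤ C * (1 + |z.im|) ^ N := by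
  obtain ⟨c, hc, hcz⟩ := exists_le_norm_riemannZeta₁_two_add
  set K : ℝ := 75 / c + 2 with hK
  have hK2 : 2 < K := by have : 0 < 75 / c := by positivity
                         linarith
  -- `A` majorises the Borel–Carathéodory constant `2r / (R - r)` for `R = 3 / 2` and `r ≤ 2 - a`.
  set A : ℝ := 2 * (3 / 2) / (a - 1 / 2) with hA
  have hA0 : 0 < A := div_pos (by norm_num) (by linarith)
  refine ⟨c⁻¹ * K ^ A, ⌈2 * A⌉₊, by positivity, fun z hz1 hz2 ↦ ?_⟩
  set τ := z.im
  set p : ℂ := ⟨2, τ⟩ with hp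
  -- `B` bounds `|ζ₁(p + w) / ζ₁(p)|` on the disk `|w| < 3 / 2`.
  set B : ℝ := K * (1 + |τ|) ^ 2 with hB
  have hτ : 0 ≤ |τ| := abs_nonneg τ
  have hB1 : 1 < B := by nlinarith
  have hR : (0 : ℝ) < 3 / 2 := by norm_num
  have hre : ∀ w ∈ Metric.ball (0 : ℂ) (3 / 2), 1 / 2 < (p + w).re := by
    intro w hw
    rw [mem_ball_zero_iff] at hw
    have := (abs_le.mp ((abs_re_le_norm w).trans hw.le)).1
    have h2 := (abs_lt.mp ((abs_re_le_norm w).trans_lt hw)).1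
    rw [add_re]
    change 1 / 2 < 2 + w.re
    linarith
  obtain ⟨h, hhd, hh0, hh⟩ := exists_log_on_ball (g := fun w ↦ riemannZeta₁ (p + w)) hR
    (by fun_prop) fun w hw ↦ riemannZeta₁_ne_zero hRH (hre w hw)
  simp only [add_zero] at hh
  have hcp : c ≤ ‖riemannZeta₁ p‖ := hcz p rfl
  have hpn : ‖p‖ ≤ 2 + |τ| := by
    refine (norm_le_abs_re_add_abs_im p).trans ?_
    simp [hp]
  have hupper : MapsTo h (Metric.ball 0 (3 / 2)) {w | w.re ≤ Real.log B} := by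
    intro w hw
    have h1 := congrArg norm (hh w hw)
    rw [norm_mul, norm_exp] at h1
    have h2 := norm_riemannZeta₁_le (hre w hw).le
    have h3 : ‖p + w‖ ≤ 4 + |τ| := by
      refine (norm_add_le _ _).trans ?_
      have := mem_ball_zero_iff.mp hw
      linarith
    change (h w).re ≤ Real.log B
    rw [Real.le_log_iff_exp_le (by linarith)]
    have h4 : c * Real.exp (h w).re ≤ 75 * (1 + |τ|) ^ 2 := by
      calc _ ≤ ‖riemannZeta₁ p‖ * Real.exp (h w).re := by gcongr
        _ ≤ 3 * (1 + ‖p + w‖) ^ 2 := h1 ▸ h2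
        _ ≤ 3 * (5 * (1 + |τ|)) ^ 2 := by gcongr; linarith
        _ = _ := by ring
    calc Real.exp (h w).re ≤ 75 * (1 + |τ|) ^ 2 / c := by rw [le_div_iff₀ hc]; linarith
      _ = 75 / c * (1 + |τ|) ^ 2 := by ring
      _ ≤ B := by rw [hB]; gcongr; linarith
  have hw : ((z.re - 2 : ℝ) : ℂ) ∈ Metric.ball (0 : ℂ) (3 / 2) := by
    rw [mem_ball_zero_iff, norm_real, Real.norm_eq_abs, abs_lt]
    constructor <;> linarith
  have hpz : p + ((z.re - 2 : ℝ) : ℂ) = z := by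
    apply Complex.ext <;> simp [hp, τ]
  have hM : 0 < Real.log B := Real.log_pos hB1
  have hBC := borelCaratheodory_zero hM hhd hupper hR hw hh0
  rw [norm_real, Real.norm_eq_abs, abs_of_nonpos (by linarith)] at hBC
  have hle : ‖h ((z.re - 2 : ℝ) : ℂ)‖ ≤ Real.log B * A := by
    refine hBC.trans ?_
    calc _ ≤ 2 * Real.log B * (3 / 2) / (a - 1 / 2) := by
          refine div_le_div₀ (by positivity) ?_ (by linarith) (by linarith)
          exact mul_le_mul_of_nonneg_left (by linarith) (by positivity)
      _ = Real.log B * A := by rw [hA]; ring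
  have hz := hh _ hw
  rw [hpz] at hz
  rw [hz, norm_inv, norm_mul, norm_exp, mul_inv, ← Real.exp_neg]
  have e1 : Real.exp (-(h ((z.re - 2 : ℝ) : ℂ)).re) ≤ B ^ A := by
    rw [Real.rpow_def_of_pos (by linarith)]
    gcongr
    exact (neg_le_abs _).trans ((abs_re_le_norm _).trans hle)
  -- Rounding the exponent `2A` up to a natural number.
  have e2 : B ^ A ≤ K ^ A * (1 + |τ|) ^ ⌈2 * A⌉₊ := by
    rw [hB, Real.mul_rpow (by linarith) (by positivity), ← Real.rpow_natCast, ← Real.rpow_natCast,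
      ← Real.rpow_mul (by positivity)]
    gcongr
    · linarith
    · exact_mod_cast Nat.le_ceil _
  calc _ ≤ c⁻¹ * (K ^ A * (1 + |τ|) ^ ⌈2 * A⌉₊) := by
        gcongr
        exact e1.trans e2
    _ = _ := by ring

/-! ### From the Riemann hypothesis to the decay of the Riesz series -/

/-- The function `Γ(s) / ζ(2 - 2s)`, with the removable singularity at `s = 1 / 2` filled in. -/
noncomputable def gammaDivZeta (s : ℂ) : ℂ :=
  (1 - 2 * s) * Gamma s * (riemannZeta₁ (2 - 2 * s))⁻¹

lemma differentiableAt_gammaDivZeta (hRH : RiemannHypothesis) {s : ℂ} (h0 : 0 < s.re)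
    (h1 : s.re < 3 / 4) : DifferentiableAt ℂ gammaDivZeta s := by
  have hG : DifferentiableAt ℂ Gamma s := differentiableAt_Gamma s fun m h ↦ by
    have : (0 : ℝ) ≤ m := m.cast_nonneg
    simp [h] at h0
    linarith
  have hz : riemannZeta₁ (2 - 2 * s) ≠ 0 := riemannZeta₁_ne_zero hRH (by simp; linarith)
  have hZ : DifferentiableAt ℂ (fun s ↦ (riemannZeta₁ (2 - 2 * s))⁻¹) s :=
    DifferentiableAt.fun_inv (by fun_prop) hz
  unfold gammaDivZeta
  fun_prop

/-- The rapid decay of `Γ` beats the polynomial growth of `1 / ζ`. -/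
lemma exists_norm_gammaDivZeta_le (hRH : RiemannHypothesis) {b : ℝ} (hb : b < 3 / 4) :
    ∃ C, 0 ≤ C ∧ ∀ s : ℂ, 1 / 4 ≤ s.re → s.re ≤ b →
      ‖gammaDivZeta s‖ ≤ C * (1 + s.im ^ 2)⁻¹ := by
  obtain ⟨C₁, N, hC₁, h₁⟩ := exists_norm_inv_riemannZeta₁_le hRH (a := 2 - 2 * b) (by linarith)
  obtain ⟨C₂, hC₂, h₂⟩ := exists_norm_Gamma_mul_pow_le (N + 3) (a := 1 / 4) (b := b) (by norm_num)
  refine ⟨2 * C₂ * (C₁ * 2 ^ N), by positivity, fun s hs1 hs2 ↦ ?_⟩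
  have g1 := h₁ (2 - 2 * s) (by simp; linarith) (by simp; linarith)
  have g2 := h₂ s hs1 hs2
  have ht : 0 ≤ |s.im| := abs_nonneg _
  set T : ℝ := 1 + |s.im| with hT
  have hTpos : 0 < T := by linarith
  have g3 : ‖1 - 2 * s‖ ≤ 2 * T := by
    refine (norm_le_abs_re_add_abs_im _).trans ?_
    have e1 : |(1 - 2 * s).re| ≤ 1 := by
      rw [abs_le]; constructor <;> simp <;> linarith
    have e2 : |(1 - 2 * s).im| = 2 * |s.im| := by simp [abs_mul]
    linarith
  have g4 : 1 + |(2 - 2 * s).im| ≤ 2 * T := by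
    have e2 : |(2 - 2 * s).im| = 2 * |s.im| := by simp [abs_mul]
    linarith
  have g5 : ‖Gamma s‖ ≤ C₂ / T ^ (N + 3) := by
    rwa [le_div_iff₀ (by positivity)]
  have g6 : 1 + s.im ^ 2 ≤ T ^ 2 := by
    rw [← sq_abs s.im, hT]; nlinarith
  rw [gammaDivZeta, norm_mul, norm_mul]
  calc _ ≤ 2 * T * (C₂ / T ^ (N + 3)) * (C₁ * (2 * T) ^ N) := by
        gcongr
        exact g1.trans (by gcongr)
    _ = 2 * C₂ * (C₁ * 2 ^ N) * (T ^ 2)⁻¹ := by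
        field_simp
        ring_nf
    _ ≤ _ := by gcongr

lemma integrable_vertical {g : ℂ → ℂ} {σ C : ℝ} (hd : Continuous fun y : ℝ ↦ g (σ + y * I))
    (hb : ∀ y : ℝ, ‖g (σ + y * I)‖ ≤ C * (1 + y ^ 2)⁻¹) :
    Integrable fun y : ℝ ↦ g (σ + y * I) :=
  (integrable_inv_one_add_sq.const_mul C).mono' hd.aestronglyMeasurable (.of_forall hb)

/-- Shifting a vertical line of integration, by Cauchy's theorem on rectangles whose horizontal
sides recede to infinity. -/
lemma integral_vertical_eq {g : ℂ → ℂ} {σ₁ σ₂ C : ℝ} (hσ : σ₁ ≤ σ₂)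
    (hd : ∀ s : ℂ, σ₁ ≤ s.re → s.re ≤ σ₂ → DifferentiableAt ℂ g s)
    (hb : ∀ s : ℂ, σ₁ ≤ s.re → s.re ≤ σ₂ → ‖g s‖ ≤ C * (1 + s.im ^ 2)⁻¹) :
    ∫ y : ℝ, g (σ₁ + y * I) = ∫ y : ℝ, g (σ₂ + y * I) := by
  have hint : ∀ σ : ℝ, σ₁ ≤ σ → σ ≤ σ₂ → Integrable fun y : ℝ ↦ g (σ + y * I) := by
    intro σ h1 h2
    refine integrable_vertical (C := C) (continuous_iff_continuousAt.mpr fun y ↦ ?_) fun y ↦ ?_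
    · exact ContinuousAt.comp (g := g) (f := fun y : ℝ ↦ (σ + y * I : ℂ))
        (hd _ (by simpa) (by simpa)).continuousAt (by fun_prop)
    · simpa using hb (σ + y * I) (by simpa) (by simpa)
  have hlim : ∀ σ : ℝ, σ₁ ≤ σ → σ ≤ σ₂ →
      Tendsto (fun T : ℝ ↦ ∫ y in (-T)..T, g (σ + y * I)) atTop (𝓝 (∫ y : ℝ, g (σ + y * I))) :=
    fun σ h1 h2 ↦ intervalIntegral_tendsto_integral (hint σ h1 h2) tendsto_neg_atTop_atBot tendsto_id
  have hhor : ∀ e : ℝ, e ^ 2 = 1 →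
      Tendsto (fun T : ℝ ↦ ∫ x in σ₁..σ₂, g (x + (e * T : ℝ) * I)) atTop (𝓝 0) := by
    intro e he
    have hz : Tendsto (fun T : ℝ ↦ C * (1 + T ^ 2)⁻¹ * |σ₂ - σ₁|) atTop (𝓝 0) := by
      have : Tendsto (fun T : ℝ ↦ (1 + T ^ 2)⁻¹) atTop (𝓝 0) :=
        (tendsto_atTop_add_const_left _ _ (tendsto_pow_atTop two_ne_zero)).inv_tendsto_atTop
      simpa using (this.const_mul C).mul_const |σ₂ - σ₁|
    refine squeeze_zero_norm (fun T ↦ ?_) hz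
    refine intervalIntegral.norm_integral_le_of_norm_le_const fun x hx ↦ ?_
    rw [uIoc_of_le hσ] at hx
    have := hb (x + (e * T : ℝ) * I) (by simpa using hx.1.le) (by simpa using hx.2)
    simpa [mul_pow, he] using this
  have hrect : ∀ T : ℝ, (∫ y in (-T)..T, g (σ₁ + y * I)) - ∫ y in (-T)..T, g (σ₂ + y * I) =
      -I * ((∫ x in σ₁..σ₂, g (x + ((-1) * T : ℝ) * I)) - ∫ x in σ₁..σ₂, g (x + (1 * T : ℝ) * I)) := by
    intro T
    have := integral_boundary_rect_eq_zero_of_differentiableOn g ⟨σ₁, -T⟩ ⟨σ₂, T⟩ (fun s hs ↦ by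
      have h1 := hs.1
      simp only [uIcc_of_le hσ] at h1
      exact (hd s h1.1 h1.2).differentiableWithinAt)
    simp only [smul_eq_mul] at this
    simp only [neg_one_mul, one_mul]
    linear_combination I * this +
      ((∫ y in (-T)..T, g (σ₁ + y * I)) - ∫ y in (-T)..T, g (σ₂ + y * I)) * I_mul_I
  have h1 := (hlim σ₁ le_rfl hσ).sub (hlim σ₂ hσ le_rfl)
  have h2 := ((hhor (-1) (by norm_num)).sub (hhor 1 (by norm_num))).const_mul (-I)
  rw [sub_zero, mul_zero] at h2
  simp_rw [hrect] at h1
  exact sub_eq_zero.mp (tendsto_nhds_unique h1 h2)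

/-- Mellin inversion on `Re s = 1 / 4`, followed by a shift of the line of integration to
`Re s = b`. -/
lemma rieszSum_isBigO_of_RH (hRH : RiemannHypothesis) {b : ℝ} (hb1 : 1 / 4 ≤ b) (hb : b < 3 / 4) :
    rieszSum =O[atTop] fun x : ℝ ↦ x ^ (-b) := by
  obtain ⟨C, hC0, hC⟩ := exists_norm_gammaDivZeta_le hRH hb
  have hF : ∀ y : ℝ, mellin (fun x ↦ (rieszSum x : ℂ)) ((1 / 4 : ℝ) + y * I) =
      gammaDivZeta ((1 / 4 : ℝ) + y * I) := by
    intro y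
    have hre : (((1 / 4 : ℝ) : ℂ) + y * I).re = 1 / 4 := by simp
    rw [gammaDivZeta, ← mellin_rieszSum_mul (by rw [hre]; norm_num) (by rw [hre]; norm_num),
      mul_inv_cancel_right₀]
    refine riemannZeta₁_ne_zero hRH ?_
    rw [sub_re, mul_re, hre]
    norm_num
  have hcont : ∀ σ : ℝ, 1 / 4 ≤ σ → σ ≤ b → Continuous fun y : ℝ ↦ gammaDivZeta (σ + y * I) := by
    intro σ h1 h2
    refine continuous_iff_continuousAt.mpr fun y ↦ ?_
    exact ContinuousAt.comp (g := gammaDivZeta) (f := fun y : ℝ ↦ (σ + y * I : ℂ))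
      (differentiableAt_gammaDivZeta hRH (by simp; linarith) (by simp; linarith)).continuousAt
      (by fun_prop)
  have hvert : VerticalIntegrable (mellin fun x ↦ (rieszSum x : ℂ)) (1 / 4 : ℝ) := by
    unfold VerticalIntegrable
    simp_rw [hF]
    exact integrable_vertical (C := C) (hcont _ le_rfl hb1)
      fun y ↦ by simpa using hC ((1 / 4 : ℝ) + y * I) (by simp) (by simpa using hb1)
  refine IsBigO.of_bound (1 / (2 * Real.pi) * (C * Real.pi)) ?_
  filter_upwards [eventually_ge_atTop 1] with x hx
  have hx0 : 0 < x := by linarith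
  have hx0' : (x : ℂ) ≠ 0 := ofReal_ne_zero.mpr hx0.ne'
  have hinv := mellinInv_mellin_eq (1 / 4 : ℝ) (fun x ↦ (rieszSum x : ℂ)) hx0
    (mellinConvergent_rieszSum (by simp) (by rw [ofReal_re]; norm_num)) hvert
    (continuousOn_ofReal_rieszSum.continuousAt (Ioi_mem_nhds hx0))
  rw [mellinInv] at hinv
  simp_rw [hF] at hinv
  have hshift := integral_vertical_eq (g := fun s ↦ (x : ℂ) ^ (-s) • gammaDivZeta s) (C := C) hb1
    (fun s h1 h2 ↦ ?_) (fun s h1 h2 ↦ ?_)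
  · rw [hshift] at hinv
    rw [← norm_real, ← hinv, norm_smul, Real.norm_of_nonneg (by positivity),
      Real.norm_of_nonneg (by positivity), mul_assoc]
    gcongr
    rw [mul_assoc, ← integral_univ_inv_one_add_sq, ← integral_mul_const, ← integral_const_mul]
    refine norm_integral_le_of_norm_le ((integrable_inv_one_add_sq.mul_const _).const_mul C)
      (.of_forall fun y ↦ ?_)
    rw [norm_smul, norm_cpow_eq_rpow_re_of_pos hx0]
    have := hC (b + y * I) (by simpa using hb1) (by simp)
    simp only [neg_re, add_re, ofReal_re, mul_re, I_re, mul_zero, ofReal_im, I_im, mul_one,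
      sub_self, add_zero, add_im, mul_im, zero_add] at this ⊢
    rw [mul_comm]
    calc _ ≤ C * (1 + y ^ 2)⁻¹ * x ^ (-b) := by gcongr
      _ = _ := by ring
  · have := differentiableAt_gammaDivZeta hRH (s := s) (by linarith) (by linarith)
    have h2 : DifferentiableAt ℂ (fun s ↦ (x : ℂ) ^ (-s)) s :=
      differentiableAt_id.neg.const_cpow (Or.inl hx0')
    exact h2.smul this
  · rw [norm_smul, norm_cpow_eq_rpow_re_of_pos hx0]
    calc _ ≤ 1 * ‖gammaDivZeta s‖ := by
          gcongr
          exact Real.rpow_le_one_of_one_le_of_nonpos hx (by simp; linarith)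
      _ ≤ _ := by rw [one_mul]; exact hC s h1 h2

/-! ### From the decay of the Riesz series to the Riemann hypothesis -/

/-- A decay rate `x^(-a)` makes the Mellin transform of `rieszSum` holomorphic on `0 < Re s < a`,
whereas a zero of `ζ` at `2 - 2s` would be a pole of it. -/
lemma riemannZeta₁_ne_zero_of_isBigO {a : ℝ} (ha : 1 / 2 ≤ a)
    (h : (fun x ↦ (rieszSum x : ℂ)) =O[atTop] fun x : ℝ ↦ x ^ (-a)) {s : ℂ}
    (h0 : 0 < s.re) (h1 : s.re < a) (h2 : s.re ≠ 1 / 2) : riemannZeta₁ (2 - 2 * s) ≠ 0 := by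
  have hopen : IsOpen {s : ℂ | 0 < s.re ∧ s.re < a} :=
    (isOpen_lt continuous_const continuous_re).inter (isOpen_lt continuous_re continuous_const)
  have hl : AnalyticOnNhd ℂ
      (fun s ↦ mellin (fun x ↦ (rieszSum x : ℂ)) s * riemannZeta₁ (2 - 2 * s))
      {s : ℂ | 0 < s.re ∧ s.re < a} := by
    refine DifferentiableOn.analyticOnNhd (fun z hz ↦ ?_) hopen
    have hm := mellin_differentiableAt_of_isBigO_rpow locallyIntegrableOn_rieszSum h hz.2
      rieszSum_isBigO_zero hz.1
    have hζ : DifferentiableAt ℂ (fun s : ℂ ↦ riemannZeta₁ (2 - 2 * s)) z := by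
      fun_prop
    exact (hm.fun_mul hζ).differentiableWithinAt
  have hr : AnalyticOnNhd ℂ (fun s ↦ (1 - 2 * s) * Gamma s) {s : ℂ | 0 < s.re ∧ s.re < a} := by
    refine DifferentiableOn.analyticOnNhd (fun z hz ↦ ?_) hopen
    have hΓ : DifferentiableAt ℂ Gamma z := differentiableAt_Gamma z fun m hm ↦ by
      have := hz.1
      rw [hm] at this
      simp at this
      linarith [(Nat.cast_nonneg m : (0 : ℝ) ≤ m)]
    exact DifferentiableAt.differentiableWithinAt (by fun_prop)
  have hmem : ((1 / 4 : ℝ) : ℂ) ∈ {s : ℂ | 0 < s.re ∧ s.re < a} := by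
    constructor <;> rw [ofReal_re] <;> linarith
  have heq := hl.eqOn_of_preconnected_of_eventuallyEq hr (isPreconnected_re_strip 0 a) hmem (by
    have hnhds : {s : ℂ | 0 < s.re ∧ s.re < 1 / 2} ∈ 𝓝 (((1 / 4 : ℝ) : ℂ)) :=
      ((isOpen_lt continuous_const continuous_re).inter
        (isOpen_lt continuous_re continuous_const)).mem_nhds
        (by constructor <;> simp only [mem_ofPred_eq, ofReal_re] <;> norm_num)
    filter_upwards [hnhds] with z hz
    exact mellin_rieszSum_mul hz.1 hz.2) (show s ∈ _ from ⟨h0, h1⟩)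
  intro hzero
  simp only [hzero, mul_zero] at heq
  refine mul_ne_zero (fun h ↦ h2 ?_) (Gamma_ne_zero_of_re_pos h0) heq.symm
  have := congrArg re h
  simp at this
  linarith

/-- By the functional equation, a zero of `ζ` violating the Riemann hypothesis gives one with
`1 / 2 < Re s < 1`. -/
lemma riemannHypothesis_of_ne_zero
    (h : ∀ s : ℂ, 1 / 2 < s.re → s.re < 1 → riemannZeta s ≠ 0) : RiemannHypothesis := by
  intro w hw htriv hw1
  rcases lt_trichotomy w.re (1 / 2) with hlt | heq | hgt
  · exfalso
    have hs : ∀ n : ℕ, 1 - w ≠ -n := fun n hn ↦ by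
      have := congrArg re hn
      simp at this
      linarith [(Nat.cast_nonneg n : (0 : ℝ) ≤ n)]
    have hw0 : w ≠ 0 := by
      rintro rfl
      rw [riemannZeta_zero] at hw
      norm_num at hw
    have hs1 : 1 - w ≠ 1 := fun h ↦ hw0 (by linear_combination -h)
    have hfe := riemannZeta_one_sub hs hs1
    rw [sub_sub_cancel, hw] at hfe
    have hζ : riemannZeta (1 - w) ≠ 0 := by
      rcases lt_or_ge (1 - w).re 1 with h' | h'
      · exact h _ (by simp; linarith) h'
      · exact riemannZeta_ne_zero_of_one_le_re h'
    have hΓ : Gamma (1 - w) ≠ 0 := Gamma_ne_zero_of_re_pos (by simp; linarith)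
    have hpi : (2 * (Real.pi : ℂ)) ^ (-(1 - w)) ≠ 0 := by
      rw [Ne, cpow_eq_zero_iff]
      exact fun h ↦ (mul_ne_zero two_ne_zero (ofReal_ne_zero.mpr Real.pi_ne_zero)) h.1
    have hcos : cos (Real.pi * (1 - w) / 2) = 0 := by
      simpa [hζ, hΓ, hpi] using hfe.symm
    obtain ⟨k, hk⟩ := cos_eq_zero_iff.mp hcos
    have hpi0 : (Real.pi : ℂ) ≠ 0 := ofReal_ne_zero.mpr Real.pi_ne_zero
    -- The remaining factor `cos (π (1 - w) / 2)` must vanish, so `w` is an even integer.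
    have hwk : w = -2 * k := by
      have : (1 - w) = 2 * k + 1 := by
        apply mul_left_cancel₀ hpi0
        linear_combination 2 * hk
      linear_combination -this
    have hk0 : 0 < k := by
      have hre : w.re = -2 * k := by rw [hwk]; simp
      have hk1 : (-1 : ℝ) < k := by linarith
      have hk2 : k ≠ 0 := by
        rintro rfl
        exact hw0 (by simpa using hwk)
      have : -1 < k := by exact_mod_cast hk1
      omega
    refine htriv ⟨(k - 1).toNat, ?_⟩
    have : (((k - 1).toNat : ℤ) : ℂ) = ((k - 1 : ℤ) : ℂ) := by
      rw [Int.toNat_of_nonneg (by omega)]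
    rw [Int.cast_natCast] at this
    rw [this, hwk]
    push_cast
    ring
  · exact heq
  · exfalso
    rcases lt_or_ge w.re 1 with h' | h'
    · exact h w hgt h' hw
    · exact riemannZeta_ne_zero_of_one_le_re h' hw

lemma riemannHypothesis_of_rieszSum_isBigO
    (h : ∀ ε : ℝ, 0 < ε →
      (fun x : ℝ ↦ x * rieszSum x) =O[atTop] fun x : ℝ ↦ x ^ ((1 : ℝ) / 4 + ε)) :
    RiemannHypothesis := by
  refine riemannHypothesis_of_ne_zero fun w hw1 hw2 hw ↦ ?_
  -- The point `s = 1 - w / 2` with `2 - 2s = w` has `1 / 2 < Re s < 3 / 4`.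
  set δ : ℝ := (w.re - 1 / 2) / 4 with hδ
  have hO : (fun x ↦ (rieszSum x : ℂ)) =O[atTop] fun x : ℝ ↦ x ^ (-(3 / 4 - δ)) := by
    refine IsBigO.of_norm_left ?_
    simp_rw [norm_real]
    refine IsBigO.norm_left ?_
    have := (isBigO_refl (fun x : ℝ ↦ x⁻¹) atTop).mul (h δ (by linarith))
    refine this.congr' ?_ ?_
    · filter_upwards [eventually_gt_atTop 0] with x hx
      rw [inv_mul_cancel_left₀ hx.ne']
    · filter_upwards [eventually_gt_atTop 0] with x hx
      rw [← Real.rpow_neg_one, ← Real.rpow_add hx]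
      congr 1
      ring
  have hre : (1 - w / 2).re = 1 - w.re / 2 := by simp
  refine riemannZeta₁_ne_zero_of_isBigO (s := 1 - w / 2) (by linarith) hO ?_ ?_ ?_ ?_
  · rw [hre]; linarith
  · rw [hre]; linarith
  · rw [hre]; exact fun h ↦ by linarith
  · have hw' : 2 - 2 * (1 - w / 2) = w := by ring
    rw [hw', riemannZeta₁_eq w (fun h ↦ by rw [h, one_re] at hw2; exact lt_irrefl _ hw2), hw,
      mul_zero]

end RieszCriterion

/-- Riesz's criterion: the Riemann hypothesis holds iff for every `ε > 0`,
`x ∑_{n≥1} (μ(n)/n²) e^{-x/n²} = O(x^(1/4+ε))` as `x → ∞`. -/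
theorem riemannHypothesis_iff_riesz_isBigO :
    RiemannHypothesis ↔
      ∀ ε : ℝ, 0 < ε →
        (fun x : ℝ => x * ∑' n : ℕ, ((moebius (n + 1) : ℝ) / ((n + 1 : ℕ) : ℝ) ^ 2) *
            Real.exp (-x / ((n + 1 : ℕ) : ℝ) ^ 2))
          =O[atTop] fun x : ℝ => x ^ ((1 : ℝ) / 4 + ε) := by
  refine ⟨fun hRH ε hε ↦ ?_, RieszCriterion.riemannHypothesis_of_rieszSum_isBigO⟩
  change (fun x ↦ x * RieszCriterion.rieszSum x) =O[atTop] _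
  -- The natural exponent `3/4 - ε` is replaced by `1/4` for large `ε`, so that the line of
  -- integration is never moved to the left of `Re s = 1/4`.
  have hO := RieszCriterion.rieszSum_isBigO_of_RH hRH (b := max (1 / 4) (3 / 4 - ε))
    (le_max_left _ _) (max_lt (by norm_num) (by linarith))
  refine ((isBigO_refl (fun x : ℝ ↦ x) atTop).mul hO).trans (IsBigO.of_bound 1 ?_)
  filter_upwards [eventually_ge_atTop 1] with x hx
  have hx0 : 0 < x := by linarith
  rw [one_mul, Real.norm_of_nonneg (by positivity), Real.norm_of_nonneg (by positivity)]
  nth_rewrite 1 [← Real.rpow_one x]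
  rw [← Real.rpow_add hx0]
  refine Real.rpow_le_rpow_of_exponent_le hx ?_
  linarith [le_max_right (1 / 4 : ℝ) (3 / 4 - ε)]
end
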